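/- arXiv:0805.4482 — 4 statements merged into one kernel-verified Lean document; each statement's English description precedes it below -/
import Mathlib

section
/- Let β ≥ 1 be an integer and let y₁, y₂, y₃ be pairwise distinct real numbers. Define Φ on the open set U = {(x₁,x₂,x₃) ∈ ℝ³ : x₁, x₂, x₃ pairwise distinct} by Φ(x) = [ Σ_{k=0}^{β−1} ((β−k−1)!/(β+k−1)!) · (1/(8^k k!)) · Q̃_{β,k}(a) Q̃_{β,k}(b) Q̃_{β,k}(c) / (abc)^{2β} ] · e^{x₁y₁+x₂y₂+x₃y₃}, where a = (x₁−x₂)(y₁−y₂)/2, b = (x₁−x₃)(y₁−y₃)/2, c = (x₂−x₃)(y₂−y₃)/2. Then Φ is smooth on U and satisfies the Calogero equation: for every x ∈ U, Σ_{i=1}^{3} ∂²Φ/∂x_i²(x) + 2β Σ_{1≤i<j≤3} (1/(x_i−x_j)) (∂Φ/∂x_i(x) − ∂Φ/∂x_j(x)) = (y₁²+y₂²+y₃²) Φ(x). -/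
open Finset Function

/-- The signed polynomial
`Q̃_{β,k}(x) = Σ_{l=0}^{β-k-1} (−1)^{l+k} (β+l+k−1)!/((β−l−k−1)! l!) 2^{−l} x^{β−l−k}`
(the empty sum when `k ≥ β`), as a function on `ℝ`. -/
noncomputable def Qtilde (β k : ℕ) (x : ℝ) : ℝ :=
  ∑ l ∈ Finset.range (β - k),
    (-1 : ℝ) ^ (l + k) * (Nat.factorial (β + l + k - 1) : ℝ) /
      (Nat.factorial (β - l - k - 1) * Nat.factorial l) * (1 / 2) ^ l * x ^ (β - l - k)

/-- The candidate Calogero eigenfunction for `n = 3`: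
`Φ(x) = [Σ_{k=0}^{β−1} ((β−k−1)!/(β+k−1)!) (1/(8^k k!)) Q̃_{β,k}(a)Q̃_{β,k}(b)Q̃_{β,k}(c)/(abc)^{2β}] e^{Σ xᵢyᵢ}`
where `a = (x₁−x₂)(y₁−y₂)/2`, `b = (x₁−x₃)(y₁−y₃)/2`, `c = (x₂−x₃)(y₂−y₃)/2`. -/
noncomputable def Phi (β : ℕ) (y : Fin 3 → ℝ) (x : Fin 3 → ℝ) : ℝ :=
  (∑ k ∈ Finset.range β,
      (Nat.factorial (β - k - 1) : ℝ) / (Nat.factorial (β + k - 1)) *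
        (1 / (8 ^ k * Nat.factorial k)) *
        (Qtilde β k ((x 0 - x 1) * (y 0 - y 1) / 2) *
          Qtilde β k ((x 0 - x 2) * (y 0 - y 2) / 2) *
          Qtilde β k ((x 1 - x 2) * (y 1 - y 2) / 2)) /
        ((x 0 - x 1) * (y 0 - y 1) / 2 * ((x 0 - x 2) * (y 0 - y 2) / 2) *
          ((x 1 - x 2) * (y 1 - y 2) / 2)) ^ (2 * β)) *
    Real.exp (∑ i, x i * y i)

/-!
Each summand of `Phi` is a plane wave times a product `h k a * h k b * h k c` over the three pairs,
with `h k z = Q̃_{β,k}(z) / z^{2β}`. On such a product the Calogero operator is `∑ yᵢ²` plus one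
radial term per pair and one cross term per two pairs. The Bessel differential equation gives
`h k` a three-term recurrence in `k`, which makes the radial operator act on `h k` by `-2k`. The
same recurrence matches that of the coefficients of the sum, and a summation by telescoping then
shows that the cross term of the pairs `a, b`, summed over `k`, is a quantity symmetric in
`a, b, c` minus `2c` times `∑ k c_k (h k a) (h k b) (h k c)`. The symmetric parts cancel because
`1 / (pq) - 1 / (pr) + 1 / (qr) = 0` for `p = x₁ - x₂`, `q = x₁ - x₃`, `r = x₂ - x₃`, and the
remainder cancels the radial terms.
-/

section BesselPolynomial

open Polynomial

/-- The Bessel polynomial `y_{β-1}` evaluated at `-X`, which generates all the `Qtilde β k`: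
up to powers of `2` and of `x`, `Qtilde β k x` is its `k`-th derivative at `x⁻¹`.
It is indexed by the coupling constant `β` rather than by its degree, so it is `0` for `β = 0`. -/
noncomputable def signedBesselPoly (β : ℕ) : ℝ[X] :=
  ∑ m ∈ range β,
    C ((-1) ^ m * ((β + m - 1).factorial : ℝ) / ((β - m - 1).factorial * m.factorial) *
      (1 / 2) ^ m) * X ^ m

lemma coeff_signedBesselPoly_of_lt {β m : ℕ} (hm : m < β) :
    (signedBesselPoly β).coeff m =
      (-1) ^ m * ((β + m - 1).factorial : ℝ) / ((β - m - 1).factorial * m.factorial) *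
        (1 / 2) ^ m := by
  simp only [signedBesselPoly, finsetSum_coeff, coeff_C_mul_X_pow]
  rw [sum_ite_eq, if_pos (mem_range.2 hm)]

lemma coeff_signedBesselPoly_of_le {β m : ℕ} (hm : β ≤ m) : (signedBesselPoly β).coeff m = 0 := by
  simp only [signedBesselPoly, finsetSum_coeff, coeff_C_mul_X_pow]
  rw [sum_ite_eq, if_neg (by simpa using hm)]

lemma two_mul_succ_mul_coeff_signedBesselPoly_succ (β m : ℕ) :
    2 * ((m : ℝ) + 1) * (signedBesselPoly β).coeff (m + 1) =
      -((β + m) * (β - m - 1)) * (signedBesselPoly β).coeff m := by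
  rcases lt_trichotomy β (m + 1) with h | rfl | h
  · rw [coeff_signedBesselPoly_of_le h.le, coeff_signedBesselPoly_of_le (by omega)]
    ring
  · rw [coeff_signedBesselPoly_of_le le_rfl]
    push_cast
    ring
  · obtain ⟨n, rfl⟩ : ∃ n, β = m + 2 + n := ⟨β - (m + 2), by omega⟩
    rw [coeff_signedBesselPoly_of_lt h, coeff_signedBesselPoly_of_lt (by omega),
      show m + 2 + n + (m + 1) - 1 = (m + 1 + n + m) + 1 by omega,
      show m + 2 + n + m - 1 = m + 1 + n + m by omega,
      show m + 2 + n - (m + 1) - 1 = n by omega,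
      show m + 2 + n - m - 1 = n + 1 by omega]
    simp only [Nat.factorial_succ]
    push_cast
    field_simp
    ring

lemma signedBesselPoly_ode (β : ℕ) :
    X ^ 2 * derivative (derivative (signedBesselPoly β)) +
        (2 * X - 2) * derivative (signedBesselPoly β) =
      C ((β : ℝ) * (β - 1)) * signedBesselPoly β := by
  ext m
  have hrec := two_mul_succ_mul_coeff_signedBesselPoly_succ β m
  rw [sub_mul, mul_assoc, coeff_add, coeff_sub, coeff_C_mul, coeff_ofNat_mul, coeff_ofNat_mul,
    coeff_X_pow_mul']
  rcases m with _ | _ | m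
  · simp only [CharP.cast_eq_zero, zero_add, nonpos_iff_eq_zero, OfNat.ofNat_ne_zero, ↓reduceIte,
      mul_coeff_zero, coeff_X_zero, coeff_derivative] at hrec ⊢
    linear_combination -hrec
  · simp only [zero_add, Nat.cast_one, Nat.reduceAdd, Nat.not_ofNat_le_one, ↓reduceIte,
      coeff_X_mul, coeff_derivative, CharP.cast_eq_zero] at hrec ⊢
    linear_combination -hrec
  · simp only [Nat.cast_add, Nat.cast_one, le_add_iff_nonneg_left, zero_le, ↓reduceIte,
      Nat.reduceSubDiff, coeff_derivative, coeff_X_mul] at hrec ⊢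
    linear_combination -hrec

lemma iterate_derivative_signedBesselPoly_ode (β k : ℕ) :
    X ^ 2 * derivative^[k + 2] (signedBesselPoly β) +
        (2 * (k + 1 : ℝ[X]) * X - 2) * derivative^[k + 1] (signedBesselPoly β) =
      (β + k : ℝ[X]) * (β - k - 1 : ℝ[X]) * derivative^[k] (signedBesselPoly β) := by
  induction k with
  | zero => simpa using signedBesselPoly_ode β
  | succ k ih =>
    have h := congrArg derivative ih
    simp only [derivative_mul, derivative_add, derivative_sub, derivative_X_sq, derivative_X,
      derivative_natCast, derivative_ofNat, derivative_one, map_ofNat,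
      ← iterate_succ_apply' derivative] at h
    push_cast at h ⊢
    linear_combination h

end BesselPolynomial

section BesselFactor

open Polynomial

/-- The factor `Q̃_{β,k}(z) / z^{2β}` of `Phi`, in a closed form that makes its derivative and its
recurrence in `k` visible. -/
noncomputable def besselFactor (β k : ℕ) (z : ℝ) : ℝ :=
  2 ^ k * z⁻¹ ^ (β + k) * (derivative^[k] (signedBesselPoly β)).eval z⁻¹

lemma besselFactor_self (β : ℕ) (z : ℝ) : besselFactor β β z = 0 := by
  have hdeg : (signedBesselPoly β).degree < β :=
    (degree_lt_iff_coeff_zero _ _).2 fun _ hm => coeff_signedBesselPoly_of_le hm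
  rw [besselFactor, iterate_derivative_eq_zero_of_degree_lt hdeg, eval_zero, mul_zero]

lemma natDegree_iterate_derivative_signedBesselPoly_lt {β k : ℕ} (hk : k < β) :
    (derivative^[k] (signedBesselPoly β)).natDegree < β - k := by
  have hdeg : (signedBesselPoly β).natDegree ≤ β - 1 :=
    natDegree_le_iff_coeff_eq_zero.2 fun _ hm => coeff_signedBesselPoly_of_le (by omega)
  have := natDegree_iterate_derivative (signedBesselPoly β) k
  omega

lemma coeff_iterate_derivative_signedBesselPoly {β k l : ℕ} (hl : l + k < β) :
    2 ^ k * (derivative^[k] (signedBesselPoly β)).coeff l =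
      (-1) ^ (l + k) * ((β + l + k - 1).factorial : ℝ) /
        ((β - l - k - 1).factorial * l.factorial) * (1 / 2) ^ l := by
  have hfact : ((l + k).factorial : ℝ) = l.factorial * (l + k).descFactorial k := by
    rw [← Nat.factorial_mul_descFactorial (Nat.le_add_left k l), Nat.add_sub_cancel, Nat.cast_mul]
  have hdesc : ((l + k).descFactorial k : ℝ) ≠ 0 :=
    mod_cast (Nat.descFactorial_pos.2 (Nat.le_add_left k l)).ne'
  rw [coeff_iterate_derivative, coeff_signedBesselPoly_of_lt hl, hfact, ← add_assoc,
    Nat.sub_add_eq β l k, nsmul_eq_mul, pow_add (1 / 2 : ℝ), one_div_pow _ k]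
  field_simp

lemma Qtilde_div_pow {β k : ℕ} (hk : k < β) (z : ℝ) :
    Qtilde β k z / z ^ (2 * β) = besselFactor β k z := by
  rw [Qtilde, besselFactor, sum_div,
    eval_eq_sum_range' (natDegree_iterate_derivative_signedBesselPoly_lt hk), mul_sum]
  refine sum_congr rfl fun l hl => ?_
  have hl : l + k < β := by have := mem_range.1 hl; omega
  have hpow : z ^ (β - l - k) / z ^ (2 * β) = z⁻¹ ^ (β + k) * z⁻¹ ^ l := by
    rcases eq_or_ne z 0 with rfl | hz
    · rw [zero_pow (by omega), inv_zero, zero_pow (by omega : β + k ≠ 0), zero_div, zero_mul]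
    · rw [inv_pow, inv_pow, ← mul_inv, ← pow_add, div_eq_iff (by positivity), inv_mul_eq_div,
        eq_div_iff (by positivity), ← pow_add]
      congr 1
      omega
  rw [mul_div_assoc, hpow, ← coeff_iterate_derivative_signedBesselPoly hl]
  ring

lemma contDiffAt_besselFactor (β k : ℕ) {n : WithTop ℕ∞} {z : ℝ} (hz : z ≠ 0) :
    ContDiffAt ℝ n (besselFactor β k) z := by
  have hinv : ContDiffAt ℝ n (fun z : ℝ => z⁻¹) z := contDiffAt_inv ℝ hz
  have heval : ContDiffAt ℝ n (fun z : ℝ => (derivative^[k] (signedBesselPoly β)).eval z⁻¹) z :=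
    (derivative^[k] (signedBesselPoly β)).contDiff_aeval n |>.contDiffAt.comp z hinv
  exact (contDiffAt_const.mul (hinv.pow _)).mul heval

lemma hasDerivAt_besselFactor (β k : ℕ) {z : ℝ} (hz : z ≠ 0) :
    HasDerivAt (besselFactor β k)
      (-((β + k) * besselFactor β k z + besselFactor β (k + 1) z / 2) / z) z := by
  have hpow : ((β + k : ℕ) : ℝ) * z⁻¹ ^ (β + k - 1) = (β + k) * z⁻¹ ^ (β + k) * z := by
    rw [← Nat.cast_add]
    cases β + k with
    | zero => simp
    | succ n => rw [Nat.add_sub_cancel, pow_succ, mul_assoc, inv_mul_cancel_right₀ hz]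
  have h := (((hasDerivAt_inv hz).pow (β + k)).const_mul (2 ^ k)).mul
    (((derivative^[k] (signedBesselPoly β)).hasDerivAt z⁻¹).comp z (hasDerivAt_inv hz))
  refine h.congr_deriv ?_
  rw [hpow]
  simp only [besselFactor, iterate_succ_apply', comp_apply, Pi.pow_apply, ← add_assoc, pow_succ]
  field_simp
  ring

lemma besselFactor_recurrence (β k : ℕ) {z : ℝ} (hz : z ≠ 0) :
    besselFactor β (k + 2) z / 4 + (k + 1 - z) * besselFactor β (k + 1) z =
      (β + k) * (β - k - 1) * besselFactor β k z := by
  have h := congrArg (Polynomial.eval z⁻¹) (iterate_derivative_signedBesselPoly_ode β k)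
  simp only [eval_add, eval_mul, eval_sub, eval_pow, eval_X, eval_natCast, eval_ofNat,
    eval_one] at h
  simp only [besselFactor, ← add_assoc, pow_succ]
  have hzz : z * z⁻¹ = 1 := mul_inv_cancel₀ hz
  linear_combination 2 ^ k * z⁻¹ ^ (β + k) * h -
    2 * 2 ^ k * z⁻¹ ^ (β + k) * (derivative^[k + 1] (signedBesselPoly β)).eval z⁻¹ * hzz

end BesselFactor

section RadialOperators

/-- The conjugate `z ^ (1 - β) ∘ d/dz ∘ z ^ β` of the derivative; it measures how one factor of a
product over pairs enters the interaction with another factor. -/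
noncomputable def eulerOp (β : ℝ) (u : ℝ → ℝ) (z : ℝ) : ℝ :=
  z * deriv u z + β * u z

/-- The Calogero operator of a single pair, acting on the factor `u` of `u z * exp z`: up to the
factor `z`, this is `u'' + 2u' + (2β / z) (u' + u)`. -/
noncomputable def radialOp (β : ℝ) (u : ℝ → ℝ) (z : ℝ) : ℝ :=
  z * (iteratedDeriv 2 u z + 2 * deriv u z) + 2 * β * (deriv u z + u z)

lemma eulerOp_besselFactor (β k : ℕ) {z : ℝ} (hz : z ≠ 0) :
    eulerOp β (besselFactor β k) z = -(k * besselFactor β k z + besselFactor β (k + 1) z / 2) := by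
  rw [eulerOp, (hasDerivAt_besselFactor β k hz).deriv]
  field_simp
  ring

lemma iteratedDeriv_two_besselFactor (β k : ℕ) {z : ℝ} (hz : z ≠ 0) :
    iteratedDeriv 2 (besselFactor β k) z =
      ((β + k) * (β + k + 1) * besselFactor β k z + (β + k + 1) * besselFactor β (k + 1) z +
        besselFactor β (k + 2) z / 4) / z ^ 2 := by
  have hderiv : deriv (besselFactor β k) =ᶠ[nhds z]
      fun z => -((β + k) * besselFactor β k z + besselFactor β (k + 1) z / 2) / z :=
    (eventually_ne_nhds hz).mono fun w hw => (hasDerivAt_besselFactor β k hw).deriv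
  have h := ((((hasDerivAt_besselFactor β k hz).const_mul (β + k : ℝ)).add
    ((hasDerivAt_besselFactor β (k + 1) hz).div_const 2)).neg.div (hasDerivAt_id z) hz)
  rw [iteratedDeriv_succ, iteratedDeriv_one, hderiv.deriv_eq]
  refine h.deriv.trans ?_
  simp only [Pi.neg_apply, Pi.add_apply, id_eq]
  push_cast
  field_simp
  ring

lemma radialOp_besselFactor (β k : ℕ) {z : ℝ} (hz : z ≠ 0) :
    radialOp β (besselFactor β k) z = -2 * k * besselFactor β k z := by
  rw [radialOp, iteratedDeriv_two_besselFactor β k hz, (hasDerivAt_besselFactor β k hz).deriv]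
  field_simp
  linear_combination 4 * besselFactor_recurrence β k hz

end RadialOperators

section TwoJet

/-- `f` is twice continuously differentiable at `t`, with value `f₀`, first derivative `f₁` and
second derivative `f₂` there. -/
structure HasTwoJetAt (f : ℝ → ℝ) (f₀ f₁ f₂ t : ℝ) : Prop where
  contDiffAt : ContDiffAt ℝ 2 f t
  value_eq : f t = f₀
  deriv_eq : deriv f t = f₁
  iteratedDeriv_two_eq : iteratedDeriv 2 f t = f₂

lemma HasTwoJetAt.mul {f g : ℝ → ℝ} {f₀ f₁ f₂ g₀ g₁ g₂ t : ℝ} (hf : HasTwoJetAt f f₀ f₁ f₂ t)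
    (hg : HasTwoJetAt g g₀ g₁ g₂ t) :
    HasTwoJetAt (fun s => f s * g s) (f₀ * g₀) (f₁ * g₀ + f₀ * g₁)
      (f₂ * g₀ + 2 * (f₁ * g₁) + f₀ * g₂) t where
  contDiffAt := hf.contDiffAt.mul hg.contDiffAt
  value_eq := by rw [hf.value_eq, hg.value_eq]
  deriv_eq := by
    rw [deriv_fun_mul (hf.contDiffAt.differentiableAt two_ne_zero)
      (hg.contDiffAt.differentiableAt two_ne_zero), hf.value_eq, hg.value_eq, hf.deriv_eq,
      hg.deriv_eq]
  iteratedDeriv_two_eq := by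
    rw [iteratedDeriv_fun_mul hf.contDiffAt hg.contDiffAt]
    simp only [sum_range_succ, range_one, sum_singleton, Nat.choose_zero_right, Nat.cast_one,
      iteratedDeriv_zero, Nat.choose_one_right, Nat.cast_ofNat, iteratedDeriv_one,
      Nat.choose_self, hf.value_eq, hg.value_eq, hf.deriv_eq, hg.deriv_eq,
      hf.iteratedDeriv_two_eq, hg.iteratedDeriv_two_eq, Nat.sub_zero, Nat.add_one_sub_one,
      Nat.sub_self]
    ring

lemma hasTwoJetAt_comp_affine {u : ℝ → ℝ} {a : ℝ} (hu : ContDiffAt ℝ 2 u a) (α t : ℝ) :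
    HasTwoJetAt (fun s => u (a + α * (s - t))) (u a) (α * deriv u a)
      (α ^ 2 * iteratedDeriv 2 u a) t := by
  have haff (s : ℝ) : HasDerivAt (fun s => a + α * (s - t)) α s := by
    simpa using (((hasDerivAt_id s).sub_const t).const_mul α).const_add a
  have haff_smooth : ContDiffAt ℝ 2 (fun s => a + α * (s - t)) t := by fun_prop
  have haff_two : iteratedDeriv 2 (fun s => a + α * (s - t)) t = 0 := by
    rw [iteratedDeriv_succ, iteratedDeriv_one, funext fun s => (haff s).deriv, deriv_const]
  have hbase : a + α * (t - t) = a := by ring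
  have hu' : ContDiffAt ℝ 2 u (a + α * (t - t)) := hbase.symm ▸ hu
  constructor
  · exact hu'.comp t haff_smooth
  · rw [hbase]
  · refine ((hu'.differentiableAt two_ne_zero).hasDerivAt.comp t (haff t)).deriv.trans ?_
    rw [hbase, mul_comm]
  · refine (iteratedDeriv_comp_two (f := fun s => a + α * (s - t)) hu' haff_smooth).trans ?_
    rw [haff_two, (haff t).deriv, hbase, mul_zero, add_zero, mul_comm]

lemma hasTwoJetAt_mul_mul_mul_exp {u v w : ℝ → ℝ} {a b c : ℝ} (hu : ContDiffAt ℝ 2 u a)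
    (hv : ContDiffAt ℝ 2 v b) (hw : ContDiffAt ℝ 2 w c) (d α β γ δ t : ℝ) :
    HasTwoJetAt
      (fun s => u (a + α * (s - t)) * v (b + β * (s - t)) * w (c + γ * (s - t)) *
        Real.exp (d + δ * (s - t)))
      (u a * v b * w c * Real.exp d)
      ((α * (deriv u a * v b * w c) + β * (u a * deriv v b * w c) + γ * (u a * v b * deriv w c) +
        δ * (u a * v b * w c)) * Real.exp d)
      ((α ^ 2 * (iteratedDeriv 2 u a * v b * w c) + β ^ 2 * (u a * iteratedDeriv 2 v b * w c) +
          γ ^ 2 * (u a * v b * iteratedDeriv 2 w c) + δ ^ 2 * (u a * v b * w c) +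
          2 * (α * β * (deriv u a * deriv v b * w c) + α * γ * (deriv u a * v b * deriv w c) +
            β * γ * (u a * deriv v b * deriv w c)) +
          2 * δ * (α * (deriv u a * v b * w c) + β * (u a * deriv v b * w c) +
            γ * (u a * v b * deriv w c))) * Real.exp d) t := by
  have hexp : HasTwoJetAt (fun s => Real.exp (d + δ * (s - t))) (Real.exp d) (δ * Real.exp d)
      (δ ^ 2 * Real.exp d) t := by
    simpa [iteratedDeriv_eq_iterate] using
      hasTwoJetAt_comp_affine (Real.contDiff_exp.contDiffAt (x := d)) δ t
  convert (((hasTwoJetAt_comp_affine hu α t).mul (hasTwoJetAt_comp_affine hv β t)).mul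
    (hasTwoJetAt_comp_affine hw γ t)).mul hexp using 1 <;> ring

end TwoJet

section CalogeroOperator

variable {n : ℕ}

/-- The Calogero operator `Σᵢ ∂ᵢ² + 2β Σ_{i<j} (xᵢ - xⱼ)⁻¹ (∂ᵢ - ∂ⱼ)`, with the partial derivatives
taken along coordinate lines. -/
noncomputable def calogeroOp (β : ℝ) (F : (Fin n → ℝ) → ℝ) (x : Fin n → ℝ) : ℝ :=
  (∑ i, iteratedDeriv 2 (fun t => F (update x i t)) (x i)) +
    2 * β * ∑ i, ∑ j ∈ univ.filter (fun j => i < j), (1 / (x i - x j)) *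
      (deriv (fun t => F (update x i t)) (x i) - deriv (fun t => F (update x j t)) (x j))

lemma contDiffAt_comp_update {F : (Fin n → ℝ) → ℝ} {x : Fin n → ℝ} {m : WithTop ℕ∞}
    (hF : ContDiffAt ℝ m F x) (i : Fin n) : ContDiffAt ℝ m (fun t => F (update x i t)) (x i) := by
  refine ContDiffAt.comp (x i) (g := F) ?_ (contDiff_update m x i).contDiffAt
  rwa [update_eq_self]

lemma calogeroOp_sum {ι : Type*} (β : ℝ) (s : Finset ι) (c : ι → ℝ) (F : ι → (Fin n → ℝ) → ℝ)
    {x : Fin n → ℝ} (hF : ∀ k ∈ s, ContDiffAt ℝ 2 (F k) x) :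
    calogeroOp β (fun x => ∑ k ∈ s, c k * F k x) x = ∑ k ∈ s, c k * calogeroOp β (F k) x := by
  have hline (i : Fin n) (k : ι) (hk : k ∈ s) := contDiffAt_comp_update (hF k hk) i
  have hsecond (i : Fin n) :
      iteratedDeriv 2 (fun t => ∑ k ∈ s, c k * F k (update x i t)) (x i) =
        ∑ k ∈ s, c k * iteratedDeriv 2 (fun t => F k (update x i t)) (x i) := by
    rw [iteratedDeriv_fun_sum fun k hk => contDiffAt_const.mul (hline i k hk)]
    exact sum_congr rfl fun k _ => iteratedDeriv_const_mul_field _ _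
  have hfirst (i : Fin n) :
      deriv (fun t => ∑ k ∈ s, c k * F k (update x i t)) (x i) =
        ∑ k ∈ s, c k * deriv (fun t => F k (update x i t)) (x i) := by
    rw [deriv_fun_sum fun k hk =>
      ((hline i k hk).differentiableAt two_ne_zero).const_mul (c k)]
    exact sum_congr rfl fun k _ => deriv_const_mul_field _
  simp only [calogeroOp, hsecond, hfirst, mul_add, mul_sum, sum_add_distrib,
    ← sum_sub_distrib]
  congr 1
  · exact sum_comm
  · rw [sum_comm (s := s)]
    refine sum_congr rfl fun i _ => ?_
    rw [sum_comm (s := s)]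
    refine sum_congr rfl fun j _ => sum_congr rfl fun k _ => ?_
    ring

lemma calogeroOp_fin_three (β : ℝ) (F : (Fin 3 → ℝ) → ℝ) (x : Fin 3 → ℝ) :
    calogeroOp β F x =
      iteratedDeriv 2 (fun t => F (update x 0 t)) (x 0) +
        iteratedDeriv 2 (fun t => F (update x 1 t)) (x 1) +
        iteratedDeriv 2 (fun t => F (update x 2 t)) (x 2) +
      2 * β *
        ((deriv (fun t => F (update x 0 t)) (x 0) - deriv (fun t => F (update x 1 t)) (x 1)) /
            (x 0 - x 1) +
          (deriv (fun t => F (update x 0 t)) (x 0) - deriv (fun t => F (update x 2 t)) (x 2)) /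
            (x 0 - x 2) +
          (deriv (fun t => F (update x 1 t)) (x 1) - deriv (fun t => F (update x 2 t)) (x 2)) /
            (x 1 - x 2)) := by
  have hgt₀ : univ.filter (fun j : Fin 3 => 0 < j) = {1, 2} := by decide
  have hgt₁ : univ.filter (fun j : Fin 3 => 1 < j) = {2} := by decide
  have hgt₂ : univ.filter (fun j : Fin 3 => 2 < j) = ∅ := by decide
  have h12 : (1 : Fin 3) ≠ 2 := by decide
  rw [calogeroOp, Fin.sum_univ_three, Fin.sum_univ_three, hgt₀, hgt₁, hgt₂, sum_pair h12,
    sum_singleton, sum_empty]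
  ring

end CalogeroOperator

section PairProduct

/-- The argument `(xᵢ - xⱼ) (yᵢ - yⱼ) / 2` attached to the pair `i, j`. -/
noncomputable def phase (y x : Fin 3 → ℝ) (i j : Fin 3) : ℝ :=
  (x i - x j) * (y i - y j) / 2

/-- The plane wave `exp ⟨x, y⟩` modulated by one function of each of the three pair phases. -/
noncomputable def pairProduct (y : Fin 3 → ℝ) (u v w : ℝ → ℝ) (x : Fin 3 → ℝ) : ℝ :=
  u (phase y x 0 1) * v (phase y x 0 2) * w (phase y x 1 2) * Real.exp (∑ i, x i * y i)

lemma update_apply_eq_add_single_mul {ι : Type*} [DecidableEq ι] (x : ι → ℝ) (m l : ι)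
    (t : ℝ) : update x m t l = x l + (Pi.single m 1 : ι → ℝ) l * (t - x m) := by
  rcases eq_or_ne l m with rfl | h
  · rw [update_self, Pi.single_eq_same, one_mul, add_sub_cancel]
  · rw [update_of_ne h, Pi.single_eq_of_ne h, zero_mul, add_zero]

lemma phase_update (y x : Fin 3 → ℝ) (m i j : Fin 3) (t : ℝ) :
    phase y (update x m t) i j = phase y x i j + phase y (Pi.single m 1) i j * (t - x m) := by
  simp only [phase, update_apply_eq_add_single_mul]
  ring

lemma sum_update_mul {ι : Type*} [Fintype ι] [DecidableEq ι] (x y : ι → ℝ) (m : ι) (t : ℝ) :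
    ∑ i, update x m t i * y i = ∑ i, x i * y i + y m * (t - x m) := by
  simp only [update_apply_eq_add_single_mul, add_mul, sum_add_distrib, Pi.single_apply, ite_mul,
    one_mul, zero_mul, sum_ite_eq', mem_univ, if_true, mul_comm (y m)]

variable {y x : Fin 3 → ℝ} {u v w : ℝ → ℝ}

lemma contDiffAt_pairProduct {n : WithTop ℕ∞} (hu : ContDiffAt ℝ n u (phase y x 0 1))
    (hv : ContDiffAt ℝ n v (phase y x 0 2)) (hw : ContDiffAt ℝ n w (phase y x 1 2)) :
    ContDiffAt ℝ n (pairProduct y u v w) x := by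
  have hphase (i j : Fin 3) : ContDiffAt ℝ n (fun x => phase y x i j) x := by
    unfold phase
    fun_prop
  have hexp : ContDiffAt ℝ n (fun x : Fin 3 → ℝ => Real.exp (∑ i, x i * y i)) x := by fun_prop
  exact (((hu.comp x (hphase 0 1)).mul (hv.comp x (hphase 0 2))).mul
    (hw.comp x (hphase 1 2))).mul hexp

lemma pairProduct_update (m : Fin 3) (t : ℝ) :
    pairProduct y u v w (update x m t) =
      u (phase y x 0 1 + phase y (Pi.single m 1) 0 1 * (t - x m)) *
        v (phase y x 0 2 + phase y (Pi.single m 1) 0 2 * (t - x m)) *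
        w (phase y x 1 2 + phase y (Pi.single m 1) 1 2 * (t - x m)) *
        Real.exp (∑ i, x i * y i + y m * (t - x m)) := by
  simp only [pairProduct, phase_update, sum_update_mul]

/-- What the Calogero operator with coupling `β` adds to the eigenvalue `∑ yᵢ²` on
`pairProduct y u v w`, divided by the plane wave: a `radialOp` for each pair and an `eulerOp` for
each two of the pairs. -/
noncomputable def pairInteraction (β : ℝ) (y : Fin 3 → ℝ) (u v w : ℝ → ℝ) (x : Fin 3 → ℝ) : ℝ :=
  let a := phase y x 0 1
  let b := phase y x 0 2
  let c := phase y x 1 2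
  (y 0 - y 1) / (x 0 - x 1) * (radialOp β u a * v b * w c) +
    (y 0 - y 2) / (x 0 - x 2) * (u a * radialOp β v b * w c) +
    (y 1 - y 2) / (x 1 - x 2) * (u a * v b * radialOp β w c) +
    2 * (eulerOp β u a * eulerOp β v b * w c / ((x 0 - x 1) * (x 0 - x 2)) -
      eulerOp β u a * v b * eulerOp β w c / ((x 0 - x 1) * (x 1 - x 2)) +
      u a * eulerOp β v b * eulerOp β w c / ((x 0 - x 2) * (x 1 - x 2)))

lemma calogeroOp_pairProduct (β : ℝ) (h01 : x 0 ≠ x 1) (h02 : x 0 ≠ x 2) (h12 : x 1 ≠ x 2)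
    (hu : ContDiffAt ℝ 2 u (phase y x 0 1)) (hv : ContDiffAt ℝ 2 v (phase y x 0 2))
    (hw : ContDiffAt ℝ 2 w (phase y x 1 2)) :
    calogeroOp β (pairProduct y u v w) x =
      (∑ i, y i ^ 2) * pairProduct y u v w x +
        pairInteraction β y u v w x * Real.exp (∑ i, x i * y i) := by
  have hjet (m : Fin 3) := hasTwoJetAt_mul_mul_mul_exp hu hv hw (∑ i, x i * y i)
    (phase y (Pi.single m 1) 0 1) (phase y (Pi.single m 1) 0 2) (phase y (Pi.single m 1) 1 2)
    (y m) (x m)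
  have hp : x 0 - x 1 ≠ 0 := sub_ne_zero.2 h01
  have hq : x 0 - x 2 ≠ 0 := sub_ne_zero.2 h02
  have hr : x 1 - x 2 ≠ 0 := sub_ne_zero.2 h12
  simp only [calogeroOp_fin_three, pairProduct_update, (hjet _).deriv_eq,
    (hjet _).iteratedDeriv_two_eq]
  simp only [pairProduct, pairInteraction, eulerOp, radialOp, Fin.sum_univ_three (fun i => y i ^ 2)]
  generalize u (phase y x 0 1) = u₀, deriv u (phase y x 0 1) = u₁,
    iteratedDeriv 2 u (phase y x 0 1) = u₂, v (phase y x 0 2) = v₀, deriv v (phase y x 0 2) = v₁,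
    iteratedDeriv 2 v (phase y x 0 2) = v₂, w (phase y x 1 2) = w₀, deriv w (phase y x 1 2) = w₁,
    iteratedDeriv 2 w (phase y x 1 2) = w₂, Real.exp (∑ i, x i * y i) = E
  simp only [phase, Pi.single_eq_same, ne_eq, one_ne_zero, zero_ne_one, Fin.reduceEq,
    not_false_eq_true, Pi.single_eq_of_ne]
  field_simp
  ring

end PairProduct

section Coupling

/-- The weight of the `k`-th summand of `Phi`. -/
noncomputable def couplingCoeff (β k : ℕ) : ℝ :=
  ((β - k - 1).factorial : ℝ) / (β + k - 1).factorial * (1 / (8 ^ k * k.factorial))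

lemma couplingCoeff_succ {β k : ℕ} (hk : k + 1 < β) :
    8 * (k + 1) * ((β + k) * (β - k - 1)) * couplingCoeff β (k + 1) = couplingCoeff β k := by
  obtain ⟨n, rfl⟩ : ∃ n, β = k + 2 + n := ⟨β - (k + 2), by omega⟩
  rw [couplingCoeff, couplingCoeff, show k + 2 + n + (k + 1) - 1 = (k + 1 + n + k) + 1 by omega,
    show k + 2 + n + k - 1 = k + 1 + n + k by omega, show k + 2 + n - (k + 1) - 1 = n by omega,
    show k + 2 + n - k - 1 = n + 1 by omega]
  simp only [Nat.factorial_succ]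
  push_cast
  field_simp
  ring

lemma couplingCoeff_mul_besselFactor {β k : ℕ} (hk : k < β) {c : ℝ} (hc : c ≠ 0) (a b : ℝ) :
    couplingCoeff β k *
        (besselFactor β (k + 1) a * besselFactor β (k + 1) b * besselFactor β k c) =
      8 * (k + 1) * couplingCoeff β (k + 1) *
        (besselFactor β (k + 1) a * besselFactor β (k + 1) b *
          (besselFactor β (k + 2) c / 4 + (k + 1 - c) * besselFactor β (k + 1) c)) := by
  rcases (Nat.succ_le_of_lt hk).eq_or_lt with rfl | hk
  · simp only [Nat.succ_eq_add_one, besselFactor_self, zero_mul, mul_zero]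
  · rw [besselFactor_recurrence β k hc, ← couplingCoeff_succ hk]
    ring

/-- The recurrences of `couplingCoeff` and `besselFactor` trade the index shifts in the first two
factors for one in the third, after which the summation index can be lowered by one. -/
lemma sum_couplingCoeff_mul_besselFactor_succ (β : ℕ) {c : ℝ} (hc : c ≠ 0) (a b : ℝ) :
    ∑ k ∈ range β, couplingCoeff β k *
        (besselFactor β (k + 1) a * besselFactor β (k + 1) b * besselFactor β k c) =
      ∑ k ∈ range β, 8 * k * couplingCoeff β k *
        (besselFactor β k a * besselFactor β k b *
          (besselFactor β (k + 1) c / 4 + (k - c) * besselFactor β k c)) := by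
  set G : ℕ → ℝ := fun k => 8 * k * couplingCoeff β k *
    (besselFactor β k a * besselFactor β k b *
      (besselFactor β (k + 1) c / 4 + (k - c) * besselFactor β k c)) with hG
  have hG_zero : G 0 = 0 := by simp only [hG, Nat.cast_zero, mul_zero, zero_mul]
  have hG_top : G β = 0 := by simp only [hG, besselFactor_self, mul_zero, zero_mul]
  calc _ = ∑ k ∈ range β, G (k + 1) := sum_congr rfl fun k hk => by
        rw [couplingCoeff_mul_besselFactor (mem_range.1 hk) hc, hG]
        push_cast
        rfl
    _ = ∑ k ∈ range β, G k := by
        rw [← add_zero (∑ k ∈ range β, G (k + 1)), ← hG_zero, ← sum_range_succ', sum_range_succ,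
          hG_top, add_zero]

lemma sum_couplingCoeff_mul_eulerOp_mul_eulerOp (β : ℕ) {a b c : ℝ} (ha : a ≠ 0) (hb : b ≠ 0)
    (hc : c ≠ 0) :
    ∑ k ∈ range β, couplingCoeff β k *
      (eulerOp β (besselFactor β k) a * eulerOp β (besselFactor β k) b * besselFactor β k c +
        k * (eulerOp β (besselFactor β k) a * besselFactor β k b * besselFactor β k c +
          besselFactor β k a * eulerOp β (besselFactor β k) b * besselFactor β k c +
          besselFactor β k a * besselFactor β k b * eulerOp β (besselFactor β k) c +
          2 * c * (besselFactor β k a * besselFactor β k b * besselFactor β k c))) = 0 := by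
  have htel := sub_eq_zero.2 (sum_couplingCoeff_mul_besselFactor_succ β hc a b)
  rw [← sum_sub_distrib] at htel
  have hquarter := congrArg (1 / 4 * ·) htel
  simp only [mul_sum, mul_zero] at hquarter
  refine (sum_congr rfl fun k _ => ?_).trans hquarter
  rw [eulerOp_besselFactor β k ha, eulerOp_besselFactor β k hb, eulerOp_besselFactor β k hc]
  ring

end Coupling

section Eigenfunction

lemma Phi_eq_sum_pairProduct (β : ℕ) (y : Fin 3 → ℝ) :
    Phi β y = fun x => ∑ k ∈ range β, couplingCoeff β k *
      pairProduct y (besselFactor β k) (besselFactor β k) (besselFactor β k) x := by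
  funext x
  rw [Phi, sum_mul]
  refine sum_congr rfl fun k hk => ?_
  simp only [pairProduct, phase, couplingCoeff, ← Qtilde_div_pow (mem_range.1 hk)]
  rw [mul_pow, mul_pow, mul_div_assoc, mul_div_mul_comm, mul_div_mul_comm, mul_assoc]

variable {x y : Fin 3 → ℝ}

lemma phase_ne_zero {i j : Fin 3} (hx : x i ≠ x j) (hy : y i ≠ y j) : phase y x i j ≠ 0 :=
  div_ne_zero (mul_ne_zero (sub_ne_zero.2 hx) (sub_ne_zero.2 hy)) two_ne_zero

lemma contDiffAt_pairProduct_besselFactor (hx : ∀ i j, i ≠ j → x i ≠ x j)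
    (hy : ∀ i j, i ≠ j → y i ≠ y j) (β k : ℕ) {n : WithTop ℕ∞} :
    ContDiffAt ℝ n (pairProduct y (besselFactor β k) (besselFactor β k) (besselFactor β k)) x := by
  have hsmooth {i j : Fin 3} (hij : i ≠ j) : ContDiffAt ℝ n (besselFactor β k) (phase y x i j) :=
    contDiffAt_besselFactor β k (phase_ne_zero (hx i j hij) (hy i j hij))
  exact contDiffAt_pairProduct (hsmooth (by decide)) (hsmooth (by decide)) (hsmooth (by decide))

lemma sum_couplingCoeff_mul_pairInteraction (hx : ∀ i j, i ≠ j → x i ≠ x j)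
    (hy : ∀ i j, i ≠ j → y i ≠ y j) (β : ℕ) :
    ∑ k ∈ range β, couplingCoeff β k *
      pairInteraction β y (besselFactor β k) (besselFactor β k) (besselFactor β k) x = 0 := by
  have hphase {i j : Fin 3} (hij : i ≠ j) := phase_ne_zero (hx i j hij) (hy i j hij)
  have ha : phase y x 0 1 ≠ 0 := hphase (by decide)
  have hb : phase y x 0 2 ≠ 0 := hphase (by decide)
  have hc : phase y x 1 2 ≠ 0 := hphase (by decide)
  have hp : x 0 - x 1 ≠ 0 := sub_ne_zero.2 (hx 0 1 (by decide))
  have hq : x 0 - x 2 ≠ 0 := sub_ne_zero.2 (hx 0 2 (by decide))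
  have hr : x 1 - x 2 ≠ 0 := sub_ne_zero.2 (hx 1 2 (by decide))
  have hab := sum_couplingCoeff_mul_eulerOp_mul_eulerOp β ha hb hc
  have hac := sum_couplingCoeff_mul_eulerOp_mul_eulerOp β ha hc hb
  have hbc := sum_couplingCoeff_mul_eulerOp_mul_eulerOp β hb hc ha
  have hcombination := congr(2 / ((x 0 - x 1) * (x 0 - x 2)) * $hab -
    2 / ((x 0 - x 1) * (x 1 - x 2)) * $hac + 2 / ((x 0 - x 2) * (x 1 - x 2)) * $hbc)
  simp only [mul_sum, ← sum_sub_distrib, ← sum_add_distrib, mul_zero, sub_zero,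
    add_zero] at hcombination
  refine (sum_congr rfl fun k _ => ?_).trans hcombination
  simp only [pairInteraction, radialOp_besselFactor β k ha, radialOp_besselFactor β k hb,
    radialOp_besselFactor β k hc]
  generalize besselFactor β k (phase y x 0 1) = u, besselFactor β k (phase y x 0 2) = v,
    besselFactor β k (phase y x 1 2) = w, eulerOp β (besselFactor β k) (phase y x 0 1) = u',
    eulerOp β (besselFactor β k) (phase y x 0 2) = v',
    eulerOp β (besselFactor β k) (phase y x 1 2) = w'
  simp only [phase]
  field_simp
  ring

lemma calogeroOp_Phi (hx : ∀ i j, i ≠ j → x i ≠ x j) (hy : ∀ i j, i ≠ j → y i ≠ y j) (β : ℕ) :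
    calogeroOp β (Phi β y) x = (∑ i, y i ^ 2) * Phi β y x := by
  have hphase {i j : Fin 3} (hij : i ≠ j) := phase_ne_zero (hx i j hij) (hy i j hij)
  rw [Phi_eq_sum_pairProduct, calogeroOp_sum _ _ _ _ fun k _ =>
    contDiffAt_pairProduct_besselFactor hx hy β k]
  have hterm (k : ℕ) := calogeroOp_pairProduct (y := y) (β : ℝ)
    (hx 0 1 (by decide)) (hx 0 2 (by decide)) (hx 1 2 (by decide))
    (contDiffAt_besselFactor β k (hphase (by decide)))
    (contDiffAt_besselFactor β k (hphase (by decide)))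
    (contDiffAt_besselFactor β k (hphase (by decide)))
  simp only [hterm, mul_add, sum_add_distrib, ← mul_assoc]
  rw [← sum_mul, sum_couplingCoeff_mul_pairInteraction hx hy, zero_mul, add_zero, mul_sum]
  exact sum_congr rfl fun k _ => by ring

end Eigenfunction

/-- for an integer `β ≥ 1` and pairwise distinct `y₁, y₂, y₃`, the
function `Φ` is smooth on the open set `U` of points with pairwise distinct coordinates
and satisfies the Calogero equation
`Σᵢ ∂²Φ/∂xᵢ² + 2β Σ_{i<j} (∂Φ/∂xᵢ − ∂Φ/∂xⱼ)/(xᵢ−xⱼ) = (Σᵢ yᵢ²) Φ` on `U`. -/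
theorem statement11 (β : ℕ) (hβ : 1 ≤ β) (y : Fin 3 → ℝ)
    (hy : ∀ i j : Fin 3, i ≠ j → y i ≠ y j) :
    ContDiffOn ℝ (⊤ : ℕ∞) (Phi β y) {x : Fin 3 → ℝ | ∀ i j : Fin 3, i ≠ j → x i ≠ x j} ∧
    ∀ x : Fin 3 → ℝ, (∀ i j : Fin 3, i ≠ j → x i ≠ x j) →
      (∑ i : Fin 3, iteratedDeriv 2 (fun t => Phi β y (Function.update x i t)) (x i)) +
        2 * (β : ℝ) *
          ∑ i : Fin 3, ∑ j ∈ Finset.univ.filter (fun j => i < j),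
            (1 / (x i - x j)) *
              (deriv (fun t => Phi β y (Function.update x i t)) (x i) -
                deriv (fun t => Phi β y (Function.update x j t)) (x j)) =
      (∑ i : Fin 3, (y i) ^ 2) * Phi β y x := by
  refine ⟨fun x hx => ?_, fun x hx => calogeroOp_Phi hx hy β⟩
  rw [Phi_eq_sum_pairProduct]
  exact (ContDiffAt.sum fun k _ => contDiffAt_const.mul
    (contDiffAt_pairProduct_besselFactor hx hy β k)).contDiffWithinAt
end

section
/- Let n ≥ 1, let μ be the Haar probability measure on the unitary group U(n) of n×n complex matrices, let x = (x₁,…,x_n) ∈ ℝⁿ, and let y = (y₁,…,y_n) ∈ ℝⁿ have pairwise distinct entries. For 1 ≤ i, j ≤ n define M_{i,j}(x, y) = ∫_{U(n)} |U_{ij}|² · exp(Re tr(X U Y U⁻¹)) dμ(U), where X = diag(x₁,…,x_n) and Y = diag(y₁,…,y_n). Then for each i, j, the function y_j ↦ M_{i,j}(x,y) is differentiable and ∂M_{i,j}/∂y_j + Σ_{l≠j} (M_{i,l} − M_{i,j})/(y_l − y_j) = x_i · M_{i,j}. -/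
open MeasureTheory Matrix Finset Function

noncomputable instance {n : ℕ} : MeasurableSpace (Matrix (Fin n) (Fin n) ℂ) :=
  inferInstanceAs (MeasurableSpace (Fin n → Fin n → ℂ))

/-- The quadratic (Morozov) moment `M_{i,j}(x,y) = ∫_{U(n)} |U_{ij}|² e^{Re tr(X U Y U⁻¹)} dμ(U)`
where `X = diag x` and `Y = diag y`. -/
noncomputable def Mmom (n : ℕ) (μ : Measure (Matrix.unitaryGroup (Fin n) ℂ))
    (x y : Fin n → ℝ) (i j : Fin n) : ℝ :=
  ∫ U : Matrix.unitaryGroup (Fin n) ℂ,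
    ‖(U : Matrix (Fin n) (Fin n) ℂ) i j‖ ^ 2 *
      Real.exp ((Matrix.trace (Matrix.diagonal (fun l => (x l : ℂ)) *
        (U : Matrix (Fin n) (Fin n) ℂ) * Matrix.diagonal (fun l => (y l : ℂ)) *
        ((U⁻¹ : Matrix.unitaryGroup (Fin n) ℂ) : Matrix (Fin n) (Fin n) ℂ))).re) ∂μ

/-!
Write `M_B(C)` for `∫ tr (C U B U⁻¹) exp (tr (X U Y U⁻¹)) dμ(U)` and differentiate its integrand
along `U ↦ U exp (tA)`. By right invariance the integral of the derivative vanishes, which gives the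
loop equation
`∫ (tr (C U ⁅A, B⁆ U⁻¹) + tr (C U B U⁻¹) tr (X U ⁅A, Y⁆ U⁻¹)) exp (tr (X U Y U⁻¹)) dμ(U) = 0`,
first for skew-Hermitian `A` and then, by linearity, for every matrix `A`. With `A = E_{lj}`,
`B = E_{jl}` and `Y = diag y` the brackets are `E_{ll} - E_{jj}` and `(y_j - y_l) E_{lj}`, so the
quotient of `M_{E_{ll}}(C) - M_{E_{jj}}(C)` by `y_l - y_j` is the integral of
`tr (C U E_{jl} U⁻¹) tr (X U E_{lj} U⁻¹) exp (tr (X U Y U⁻¹))`. For `l = j` this integral is the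
derivative of `M_{E_{jj}}(C)` in `y_j`, and since `U U⁻¹ = 1` its sum over all `l` is
`M_{E_{jj}}(X C)`. For `C = E_{ii}` and `X = diag x` one has `X C = x_i C`.
-/

section Diagonal

variable {ι : Type*} [DecidableEq ι]

theorem diagonal_update_eq_add_smul_single {R : Type*} [NonAssocRing R] (y : ι → R) (j : ι)
    (z : R) : diagonal (update y j z) = diagonal y + (z - y j) • single j j 1 := by
  rw [smul_single, smul_eq_mul, mul_one, ← diagonal_single, diagonal_add]
  congr 1 with k
  obtain rfl | hk := eq_or_ne k j <;> simp [*]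

theorem diagonal_mul_single_one {R : Type*} [Fintype ι] [NonAssocSemiring R] (v : ι → R) (i : ι) :
    diagonal v * single i i 1 = v i • single i i 1 := by
  rw [← diagonal_single, diagonal_mul_diagonal, ← diagonal_smul]
  congr 1 with k
  obtain rfl | hk := eq_or_ne k i <;> simp [*]

end Diagonal

section CompactGroup

variable {K E : Type*} [TopologicalSpace K] [CompactSpace K] [MeasurableSpace K] [BorelSpace K]
  [NormedAddCommGroup E]

theorem integrable_of_continuous_of_compactSpace {f : K → E} (hf : Continuous f) (μ : Measure K)
    [IsFiniteMeasureOnCompacts μ] : Integrable f μ :=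
  hf.integrable_of_hasCompactSupport (.of_compactSpace f)

theorem hasDerivAt_integral_of_continuous_deriv {𝕜 : Type*} [RCLike 𝕜] [NormedSpace ℝ E]
    [NormedSpace 𝕜 E] {μ : Measure K} [IsFiniteMeasure μ] {F F' : 𝕜 → K → E}
    (hF : ∀ t, Continuous (F t)) (hF' : Continuous (uncurry F'))
    (hderiv : ∀ t u, HasDerivAt (fun s => F s u) (F' t u) t) (t₀ : 𝕜) :
    HasDerivAt (fun t => ∫ u, F t u ∂μ) (∫ u, F' t₀ u ∂μ) t₀ := by
  have hball : IsCompact (Metric.closedBall t₀ 1 ×ˢ (Set.univ : Set K)) :=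
    (isCompact_closedBall _ _).prod isCompact_univ
  obtain ⟨C, hC⟩ := hball.exists_bound_of_continuousOn hF'.continuousOn
  exact (hasDerivAt_integral_of_dominated_loc_of_deriv_le (bound := fun _ => C)
    (Metric.closedBall_mem_nhds t₀ one_pos)
    (.of_forall fun t => (integrable_of_continuous_of_compactSpace (hF t) μ).aestronglyMeasurable)
    (integrable_of_continuous_of_compactSpace (hF t₀) μ)
    (integrable_of_continuous_of_compactSpace (hF'.comp (.prodMk_right t₀)) μ).aestronglyMeasurable
    (.of_forall fun u t ht => hC (t, u) ⟨ht, trivial⟩) (integrable_const C)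
    (.of_forall fun u t _ => hderiv t u)).2

variable {G : Type*} [Group G] [TopologicalSpace G] [IsTopologicalGroup G] [CompactSpace G]
  [MeasurableSpace G] [BorelSpace G]

theorem isMulRightInvariant_of_compactSpace (μ : Measure G) [μ.IsHaarMeasure] :
    μ.IsMulRightInvariant where
  map_mul_right_eq_self g := by
    have hmap := Measure.isMulInvariant_eq_smul_of_compactSpace (μ.map (· * g)) μ
    have hmass := congrArg (· Set.univ) hmap
    set c := Measure.haarScalarFactor (μ.map (· * g)) μ
    simp only [Measure.map_apply (measurable_mul_const g) .univ, Set.preimage_univ,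
      Measure.smul_apply, ENNReal.smul_def, smul_eq_mul] at hmass
    have hc : (c : ENNReal) = 1 := ((ENNReal.mul_eq_right
      (NeZero.ne (μ Set.univ)) (measure_ne_top μ Set.univ)).1 hmass.symm)
    rw [hmap, ENNReal.coe_eq_one.1 hc, one_smul]

theorem integral_deriv_mul_right_eq_zero [NormedSpace ℝ E] {μ : Measure G} [IsFiniteMeasure μ]
    [μ.IsMulRightInvariant] {γ : ℝ → G} (hγ : Continuous γ) {f f' : G → E} (hf : Continuous f)
    (hf' : Continuous f')
    (hderiv : ∀ g t, HasDerivAt (fun s => f (g * γ s)) (f' (g * γ t)) t) :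
    ∫ g, f' g ∂μ = 0 := by
  have h := hasDerivAt_integral_of_continuous_deriv (μ := μ) (F := fun t g => f (g * γ t))
    (F' := fun t g => f' (g * γ t)) (fun t => by fun_prop)
    (by simp only [uncurry_def]; fun_prop) (fun t g => hderiv g t) 0
  simp only [integral_mul_right_eq_self] at h
  exact h.unique (hasDerivAt_const 0 _)

end CompactGroup

section ConjTrace

variable {ι : Type*} [Fintype ι] [DecidableEq ι]

instance {𝕜 : Type*} [RCLike 𝕜] : CompactSpace (unitaryGroup ι 𝕜) := by
  have hbox : IsCompact (Set.univ.pi fun _ : ι => Set.univ.pi fun _ : ι =>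
      Metric.closedBall (0 : 𝕜) 1) :=
    isCompact_univ_pi fun _ => isCompact_univ_pi fun _ => isCompact_closedBall _ _
  refine isCompact_iff_compactSpace.mp
    (hbox.of_isClosed_subset (isClosed_unitary (R := Matrix ι ι 𝕜)) ?_)
  intro U hU k _ l _
  simpa using entry_norm_bound_of_unitary hU k l

/-- The functional `B ↦ tr (C U B U⁻¹)`, bundled as a linear map in `B`, the variable in which
differentiating along `U ↦ U exp (tA)` acts, by `B ↦ ⁅A, B⁆`. -/
noncomputable def conjTrace (C : Matrix ι ι ℂ) (U : unitaryGroup ι ℂ) : Matrix ι ι ℂ →ₗ[ℂ] ℂ :=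
  traceLinearMap ι ℂ ℂ ∘ₗ LinearMap.mulLeft ℂ C ∘ₗ
    (Unitary.conjStarAlgAut ℂ (Matrix ι ι ℂ) U).toAlgEquiv.toLinearMap

theorem conjTrace_apply (C : Matrix ι ι ℂ) (U : unitaryGroup ι ℂ) (B : Matrix ι ι ℂ) :
    conjTrace C U B = trace (C * (U.1 * B * star U.1)) := rfl

@[fun_prop]
theorem continuous_conjTrace (C B : Matrix ι ι ℂ) : Continuous fun U => conjTrace C U B := by
  simp only [conjTrace_apply]
  fun_prop

theorem conjTrace_smul_left (c : ℂ) (C : Matrix ι ι ℂ) (U : unitaryGroup ι ℂ)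
    (B : Matrix ι ι ℂ) : conjTrace (c • C) U B = c * conjTrace C U B := by
  simp [conjTrace_apply]

theorem star_conjTrace (C : Matrix ι ι ℂ) (U : unitaryGroup ι ℂ) (B : Matrix ι ι ℂ) :
    star (conjTrace C U B) = conjTrace (star C) U (star B) := by
  simp only [conjTrace_apply, ← trace_conjTranspose, ← star_eq_conjTranspose, star_mul, star_star]
  rw [trace_mul_comm, Matrix.mul_assoc]

theorem conjTrace_single (C : Matrix ι ι ℂ) (U : unitaryGroup ι ℂ) (k l : ι) :
    conjTrace C U (single k l 1) = (star U.1 * C * U.1) l k := by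
  rw [conjTrace_apply, ← Matrix.mul_assoc, trace_mul_comm, ← Matrix.mul_assoc, ← Matrix.mul_assoc,
    trace_mul_single, MulOpposite.op_one, one_smul]

theorem conjTrace_single_single (U : unitaryGroup ι ℂ) (i j : ι) :
    conjTrace (single i i 1) U (single j j 1) = ((‖U.1 i j‖ ^ 2 : ℝ) : ℂ) := by
  rw [conjTrace_single, Matrix.mul_assoc, Matrix.mul_apply, Finset.sum_eq_single i]
  · simp [star_apply, Complex.conj_mul']
  · intro k _ hk
    simp [hk]
  · simp

theorem sum_conjTrace_single_mul_conjTrace_single (C X : Matrix ι ι ℂ) (U : unitaryGroup ι ℂ)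
    (j : ι) :
    ∑ l, conjTrace C U (single j l 1) * conjTrace X U (single l j 1) =
      conjTrace (X * C) U (single j j 1) := by
  have hconj : star U.1 * (X * C) * U.1 = star U.1 * X * U.1 * (star U.1 * C * U.1) := by
    simp only [Matrix.mul_assoc]
    rw [← Matrix.mul_assoc U.1, mem_unitaryGroup_iff.1 U.2, Matrix.one_mul]
  simp only [conjTrace_single, hconj, Matrix.mul_apply (M := star U.1 * X * U.1), mul_comm]

open scoped Matrix.Norms.L2Operator in
theorem hasDerivAt_conjTrace_mul_expUnitary (C B : Matrix ι ι ℂ) (U : unitaryGroup ι ℂ)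
    (H : selfAdjoint (Matrix ι ι ℂ)) (t : ℝ) :
    HasDerivAt (fun s : ℝ => conjTrace C (U * selfAdjoint.expUnitary (s • H)) B)
      (conjTrace C (U * selfAdjoint.expUnitary (t • H)) ⁅Complex.I • H.1, B⁆) t := by
  set A := Complex.I • H.1 with hA
  have hskew : star A = -A := by simp [hA]
  have hflow (s : ℝ) : (U * selfAdjoint.expUnitary (s • H)).1 = U.1 * NormedSpace.exp (s • A) := by
    simp [hA, smul_comm s]
  have hexp : HasDerivAt (fun s : ℝ => (U * selfAdjoint.expUnitary (s • H)).1)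
      ((U * selfAdjoint.expUnitary (t • H)).1 * A) t := by
    simpa only [hflow, mul_assoc] using (hasDerivAt_exp_smul_const A t).const_mul U.1
  have hconj : HasDerivAt (fun s : ℝ => (U * selfAdjoint.expUnitary (s • H)).1 * B *
        star (U * selfAdjoint.expUnitary (s • H)).1)
      ((U * selfAdjoint.expUnitary (t • H)).1 * ⁅A, B⁆ *
        star (U * selfAdjoint.expUnitary (t • H)).1) t :=
    ((hexp.mul_const B).mul hexp.star).congr_deriv <| by
      rw [star_mul, hskew, Ring.lie_def]
      noncomm_ring
  let tr := (traceLinearMap ι ℂ ℂ ∘ₗ LinearMap.mulLeft ℂ C).restrictScalars ℝ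
  exact tr.toContinuousLinearMap.hasFDerivAt.comp_hasDerivAt t hconj

variable [MeasurableSpace (unitaryGroup ι ℂ)] (μ : Measure (unitaryGroup ι ℂ))

/-- The moment `∫ tr (C U Eⱼⱼ U⁻¹) exp (tr (X U (diag y) U⁻¹)) dμ(U)`. It is `M_{i,j}(x, y)` for
`C = Eᵢᵢ` and `X = diag x` (`ofReal_Mmom`); allowing every matrix in place of `Eᵢᵢ` makes it linear
in `C`. -/
noncomputable def conjMoment (C X : Matrix ι ι ℂ) (y : ι → ℂ) (j : ι) : ℂ :=
  ∫ U, conjTrace C U (single j j 1) * Complex.exp (conjTrace X U (diagonal y)) ∂μ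

theorem conjMoment_smul (c : ℂ) (C X : Matrix ι ι ℂ) (y : ι → ℂ) (j : ι) :
    conjMoment μ (c • C) X y j = c * conjMoment μ C X y j := by
  simp only [conjMoment, conjTrace_smul_left, mul_assoc, integral_const_mul]

variable [BorelSpace (unitaryGroup ι ℂ)] [IsFiniteMeasure μ]

theorem hasDerivAt_conjMoment_update (C X : Matrix ι ι ℂ) (y : ι → ℂ) (j : ι) :
    HasDerivAt (fun z => conjMoment μ C X (update y j z) j)
      (∫ U, conjTrace C U (single j j 1) * conjTrace X U (single j j 1) *
        Complex.exp (conjTrace X U (diagonal y)) ∂μ) (y j) := by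
  have hderiv (z : ℂ) (U : unitaryGroup ι ℂ) : HasDerivAt
      (fun w => conjTrace C U (single j j 1) * Complex.exp (conjTrace X U (diagonal y) +
        (w - y j) * conjTrace X U (single j j 1)))
      (conjTrace C U (single j j 1) * conjTrace X U (single j j 1) *
        Complex.exp (conjTrace X U (diagonal y) + (z - y j) * conjTrace X U (single j j 1))) z :=
    ((((hasDerivAt_id z).sub_const (y j)).mul_const _).const_add _).cexp.const_mul _
      |>.congr_deriv (by simp only [id]; ring)
  simpa only [conjMoment, diagonal_update_eq_add_smul_single, map_add, map_smul, smul_eq_mul,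
    sub_self, zero_mul, add_zero] using hasDerivAt_integral_of_continuous_deriv (μ := μ)
      (fun z => by fun_prop) (by simp only [uncurry_def]; fun_prop) hderiv (y j)

variable [μ.IsMulRightInvariant]

open scoped Matrix.Norms.L2Operator in
theorem integral_conjTrace_I_smul_lie_eq_zero (H : selfAdjoint (Matrix ι ι ℂ))
    (B C X Y : Matrix ι ι ℂ) :
    ∫ U, (conjTrace C U ⁅Complex.I • H.1, B⁆ +
      conjTrace C U B * conjTrace X U ⁅Complex.I • H.1, Y⁆) * Complex.exp (conjTrace X U Y) ∂μ
      = 0 := by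
  refine integral_deriv_mul_right_eq_zero (γ := fun t : ℝ => selfAdjoint.expUnitary (t • H))
    (f := fun U => conjTrace C U B * Complex.exp (conjTrace X U Y)) (by fun_prop) (by fun_prop)
    (by fun_prop) fun U t => ?_
  exact ((hasDerivAt_conjTrace_mul_expUnitary C B U H t).mul
    (hasDerivAt_conjTrace_mul_expUnitary X Y U H t).cexp).congr_deriv (by ring)

theorem integral_conjTrace_lie_eq_zero (A B C X Y : Matrix ι ι ℂ) :
    ∫ U, (conjTrace C U ⁅A, B⁆ + conjTrace C U B * conjTrace X U ⁅A, Y⁆) *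
      Complex.exp (conjTrace X U Y) ∂μ = 0 := by
  obtain ⟨H, K, rfl⟩ : ∃ H K : selfAdjoint (Matrix ι ι ℂ), A = H.1 + Complex.I • K.1 :=
    ⟨realPart A, imaginaryPart A, (realPart_add_I_smul_imaginaryPart A).symm⟩
  have hsplit (M : Matrix ι ι ℂ) : ⁅H.1 + Complex.I • K.1, M⁆ =
      -Complex.I • ⁅Complex.I • H.1, M⁆ + ⁅Complex.I • K.1, M⁆ := by
    simp only [Ring.lie_def, add_mul, mul_add, smul_mul_assoc, mul_smul_comm, smul_sub, smul_smul,
      neg_mul, Complex.I_mul_I, neg_neg, one_smul]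
    abel
  set Φ : selfAdjoint (Matrix ι ι ℂ) → unitaryGroup ι ℂ → ℂ := fun L U =>
    (conjTrace C U ⁅Complex.I • L.1, B⁆ + conjTrace C U B * conjTrace X U ⁅Complex.I • L.1, Y⁆) *
      Complex.exp (conjTrace X U Y) with hΦ
  have hint (L : selfAdjoint (Matrix ι ι ℂ)) : Integrable (Φ L) μ :=
    integrable_of_continuous_of_compactSpace (by fun_prop) μ
  calc _ = ∫ U, (-Complex.I * Φ H U + Φ K U) ∂μ := by
        refine congrArg (integral μ) (funext fun U => ?_)
        simp only [hΦ, hsplit, map_add, map_smul, smul_eq_mul]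
        ring
    _ = -Complex.I * ∫ U, Φ H U ∂μ + ∫ U, Φ K U ∂μ := by
        rw [integral_add ((hint H).const_mul _) (hint K), integral_const_mul]
    _ = 0 := by
        simp only [hΦ, integral_conjTrace_I_smul_lie_eq_zero, mul_zero, add_zero]

theorem conjMoment_sub_conjMoment (C X : Matrix ι ι ℂ) (y : ι → ℂ) (j l : ι) :
    conjMoment μ C X y l - conjMoment μ C X y j = (y l - y j) *
      ∫ U, conjTrace C U (single j l 1) * conjTrace X U (single l j 1) *
        Complex.exp (conjTrace X U (diagonal y)) ∂μ := by
  have hlie : ⁅single l j (1 : ℂ), single j l (1 : ℂ)⁆ = single l l 1 - single j j 1 := by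
    simp [Ring.lie_def]
  have hlie_diagonal : ⁅single l j (1 : ℂ), diagonal y⁆ = (y j - y l) • single l j 1 := by
    ext a b
    by_cases ha : l = a <;> by_cases hb : j = b <;> simp [Ring.lie_def, single, ha, hb]
  have hloop := integral_conjTrace_lie_eq_zero μ (single l j 1) (single j l 1) C X (diagonal y)
  simp only [hlie, hlie_diagonal, map_sub, map_smul, smul_eq_mul] at hloop
  rw [conjMoment, conjMoment, ← integral_const_mul, ← sub_eq_zero, ← integral_sub, ← integral_sub,
    ← hloop]
  · refine congrArg (integral μ) (funext fun U => ?_)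
    ring
  all_goals exact integrable_of_continuous_of_compactSpace (by fun_prop) μ

theorem statement12_general (C X : Matrix ι ι ℂ) (y : ι → ℂ) (j : ι)
    (hy : ∀ l, l ≠ j → y l ≠ y j) :
    HasDerivAt (fun z => conjMoment μ C X (update y j z) j)
      (conjMoment μ (X * C) X y j -
        ∑ l ∈ univ.erase j, (conjMoment μ C X y l - conjMoment μ C X y j) / (y l - y j))
      (y j) := by
  refine (hasDerivAt_conjMoment_update μ C X y j).congr_deriv ?_
  let J (l : ι) (U : unitaryGroup ι ℂ) : ℂ := conjTrace C U (single j l 1) *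
    conjTrace X U (single l j 1) * Complex.exp (conjTrace X U (diagonal y))
  have hquot : ∀ l ∈ univ.erase j,
      (conjMoment μ C X y l - conjMoment μ C X y j) / (y l - y j) = ∫ U, J l U ∂μ := by
    intro l hl
    have hlj := ne_of_mem_erase hl
    rw [conjMoment_sub_conjMoment, mul_div_cancel_left₀ _ (sub_ne_zero.2 (hy l hlj))]
  have hsum : ∑ l, ∫ U, J l U ∂μ = conjMoment μ (X * C) X y j := by
    rw [← integral_finsetSum _ fun l _ => integrable_of_continuous_of_compactSpace
      (by fun_prop) μ]
    simp only [J, ← sum_mul, sum_conjTrace_single_mul_conjTrace_single, conjMoment]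
  rw [sum_congr rfl hquot, ← hsum, sum_erase_eq_sub (mem_univ j), sub_sub_cancel]

end ConjTrace

instance (n : ℕ) : BorelSpace (Matrix (Fin n) (Fin n) ℂ) :=
  inferInstanceAs (BorelSpace (Fin n → Fin n → ℂ))

instance (n : ℕ) : BorelSpace (unitaryGroup (Fin n) ℂ) :=
  Subtype.borelSpace _

theorem ofReal_Mmom {n : ℕ} (μ : Measure (unitaryGroup (Fin n) ℂ)) (x y : Fin n → ℝ)
    (i j : Fin n) :
    (Mmom n μ x y i j : ℂ) =
      conjMoment μ (single i i 1) (diagonal (Complex.ofReal ∘ x)) (Complex.ofReal ∘ y) j := by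
  have hstar (v : Fin n → ℝ) :
      star (diagonal (Complex.ofReal ∘ v)) = diagonal (Complex.ofReal ∘ v) := by
    rw [star_eq_conjTranspose, diagonal_conjTranspose]
    congr 1 with k
    simp
  have hreal (U : unitaryGroup (Fin n) ℂ) :
      ((trace (diagonal (Complex.ofReal ∘ x) * U.1 * diagonal (Complex.ofReal ∘ y) *
        (U⁻¹).1)).re : ℂ) =
        conjTrace (diagonal (Complex.ofReal ∘ x)) U (diagonal (Complex.ofReal ∘ y)) := by
    have hself := star_conjTrace (diagonal (Complex.ofReal ∘ x)) U (diagonal (Complex.ofReal ∘ y))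
    rw [hstar, hstar] at hself
    rw [Matrix.mul_assoc, Matrix.mul_assoc, ← Matrix.mul_assoc U.1]
    exact Complex.conj_eq_iff_re.1 hself
  simp only [conjMoment, conjTrace_single_single, ← hreal, ← Complex.ofReal_exp,
    ← Complex.ofReal_mul]
  exact integral_complex_ofReal.symm

/-- Dunkl-type linear equation for the quadratic moments, `β = 1`:
for the Haar probability measure `μ` on `U(n)`, real `x` and `y` with the `y` entries
pairwise distinct, the function `y_j ↦ M_{i,j}` is differentiable and
`∂M_{i,j}/∂y_j + Σ_{l≠j} (M_{i,l} − M_{i,j})/(y_l − y_j) = x_i M_{i,j}`. -/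
theorem statement12 (n : ℕ) (hn : 1 ≤ n) (μ : Measure (Matrix.unitaryGroup (Fin n) ℂ))
    [μ.IsHaarMeasure] [IsProbabilityMeasure μ] (x y : Fin n → ℝ)
    (hy : ∀ i j : Fin n, i ≠ j → y i ≠ y j) (i j : Fin n) :
    HasDerivAt (fun t => Mmom n μ x (Function.update y j t) i j)
      (x i * Mmom n μ x y i j -
        ∑ l ∈ Finset.univ.erase j, (Mmom n μ x y i l - Mmom n μ x y i j) / (y l - y j))
      (y j) := by
  have := isMulRightInvariant_of_compactSpace μ
  have h := (statement12_general μ (single i i 1) (diagonal (Complex.ofReal ∘ x))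
    (Complex.ofReal ∘ y) j fun l hl => Complex.ofReal_injective.ne (hy l j hl)).real_of_complex
  simp only [diagonal_mul_single_one, conjMoment_smul, ← ofReal_Mmom, Function.comp_apply,
    ← Function.comp_update] at h
  exact_mod_cast h
end

section
/- Let n ≥ 1, let μ be the Haar probability measure on the unitary group U(n) of n×n complex matrices, and let y = (y₁,…,y_n) ∈ ℝⁿ. Define I(x) = ∫_{U(n)} exp(Re tr(X U Y U⁻¹)) dμ(U) for x = (x₁,…,x_n) ∈ ℝⁿ, where X = diag(x₁,…,x_n) and Y = diag(y₁,…,y_n). Then I is smooth, and at every point x with pairwise distinct entries it satisfies the Calogero equation: Σ_{i=1}^{n} ∂²I/∂x_i² + Σ_{i≠j} (1/(x_i−x_j)) (∂I/∂x_i − ∂I/∂x_j) = (Σ_{j=1}^{n} y_j²) · I(x). -/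
/-!
The Calogero equation is a Ward identity. For arbitrary complex matrices `X` and `Y`, put
`p(B) = tr(B U Y U⁻¹)` and `T(f) = ∫ f(U) e^{tr(X U Y U⁻¹)} dμ(U)`. Invariance of `μ` under
translation by `exp(tA)`, with `A` skew-adjoint, gives at `t = 0` the identity
`T(p([A, X]) p(B) + p([A, B])) = 0`. It is complex linear in `A`, and so holds for every complex
matrix `A`. For `X = diag x`, `A = Eᵢⱼ` and `B = Eⱼᵢ` it reads
`T(p(Eᵢᵢ)) − T(p(Eⱼⱼ)) = (xᵢ − xⱼ) T(p(Eᵢⱼ) p(Eⱼᵢ))`. Since `∂/∂xᵢ` inserts a factor `p(Eᵢᵢ)`, the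
left-hand side of the equation is `T(Σᵢⱼ p(Eᵢⱼ) p(Eⱼᵢ))`, and the sum is the constant `tr(Y²)`.

Smoothness and differentiation under the integral cost nothing once the integrand is read as the
exponential, in the Banach algebra of continuous functions on the compact group `U(n)`, of a
function that is linear in `X`, and the integral as a continuous linear functional.
-/

open MeasureTheory Matrix Finset Function

/-- The angular integral `I(x) = ∫_{U(n)} e^{Re tr(X U Y U⁻¹)} dμ(U)` with
`X = diag x`, `Y = diag y`. -/
noncomputable def angInt (n : ℕ) (μ : Measure (Matrix.unitaryGroup (Fin n) ℂ))
    (y : Fin n → ℝ) (x : Fin n → ℝ) : ℝ :=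
  ∫ U : Matrix.unitaryGroup (Fin n) ℂ,
    Real.exp ((Matrix.trace (Matrix.diagonal (fun l => (x l : ℂ)) *
      (U : Matrix (Fin n) (Fin n) ℂ) * Matrix.diagonal (fun l => (y l : ℂ)) *
      ((U⁻¹ : Matrix.unitaryGroup (Fin n) ℂ) : Matrix (Fin n) (Fin n) ℂ))).re) ∂μ

section ContinuousMap

variable {K : Type*} [TopologicalSpace K] [CompactSpace K]

lemma exp_continuousMap_apply (f : C(K, ℂ)) (k : K) :
    NormedSpace.exp f k = Complex.exp (f k) := by
  rw [Complex.exp_eq_exp_ℂ]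
  exact NormedSpace.map_exp (ContinuousMap.evalAlgHom ℂ ℂ k) (continuous_eval_const k) f

/-- The Bochner integral against a finite measure, as a continuous linear functional on the Banach
algebra of continuous functions on a compact space. -/
noncomputable def continuousMapIntegral [MeasurableSpace K] [BorelSpace K] (μ : Measure K)
    [IsFiniteMeasure μ] : C(K, ℂ) →L[ℂ] ℂ :=
  LinearMap.mkContinuous
    { toFun := fun f => ∫ k, f k ∂μ
      map_add' := fun f g => integral_add
        (f.continuous.integrable_of_hasCompactSupport (.of_compactSpace f))
        (g.continuous.integrable_of_hasCompactSupport (.of_compactSpace g))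
      map_smul' := fun c f => integral_const_mul c f }
    (μ.real Set.univ) fun f => by
      rw [mul_comm]
      exact norm_integral_le_of_norm_le_const (.of_forall f.norm_coe_le_norm)

lemma continuousMapIntegral_apply [MeasurableSpace K] [BorelSpace K] (μ : Measure K)
    [IsFiniteMeasure μ] (f : C(K, ℂ)) : continuousMapIntegral μ f = ∫ k, f k ∂μ := rfl

end ContinuousMap

section RealRestriction

lemma deriv_eq_ofReal_deriv {F : ℂ → ℂ} {f : ℝ → ℝ} (hf : ∀ t : ℝ, F t = f t) {t : ℝ}
    (hF : DifferentiableAt ℂ F t) : deriv F t = deriv f t := by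
  have hre : HasDerivAt f (deriv F t).re t := by
    simpa only [hf, Complex.ofReal_re] using hF.hasDerivAt.real_of_complex
  have hres : HasDerivAt (fun s : ℝ => (f s : ℂ)) (deriv F t) t := by
    simpa only [hf] using hF.hasDerivAt.comp_ofReal
  rw [hres.unique hre.ofReal_comp, hre.deriv]

lemma iteratedDeriv_eq_ofReal_iteratedDeriv {F : ℂ → ℂ} {f : ℝ → ℝ} (hf : ∀ t : ℝ, F t = f t)
    (hF : Differentiable ℂ F) (k : ℕ) (t : ℝ) :
    iteratedDeriv k F t = iteratedDeriv k f t := by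
  induction k generalizing t with
  | zero => simpa using hf t
  | succ k ih =>
    rw [iteratedDeriv_succ, iteratedDeriv_succ]
    exact deriv_eq_ofReal_deriv ih
      ((hF.contDiff (n := ⊤)).differentiable_iteratedDeriv k (WithTop.coe_lt_top _) _)

end RealRestriction

lemma hasDerivAt_exp_comp {𝕂 𝔸 : Type*} [RCLike 𝕂] [NormedCommRing 𝔸] [NormedAlgebra 𝕂 𝔸]
    [CompleteSpace 𝔸] {f : 𝕂 → 𝔸} {f' : 𝔸} {z : 𝕂} (hf : HasDerivAt f f' z) :
    HasDerivAt (fun w => NormedSpace.exp (f w)) (NormedSpace.exp (f z) * f') z := by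
  simpa using! (hasFDerivAt_exp (𝕂 := 𝕂) (x := f z)).comp_hasDerivAt z hf

lemma hasDerivAt_exp_smul_mul_mul_exp_neg_smul {𝔸 : Type*} [NormedRing 𝔸] [NormedAlgebra ℂ 𝔸]
    [CompleteSpace 𝔸] (a b : 𝔸) :
    HasDerivAt (fun z : ℂ => NormedSpace.exp (z • a) * b * NormedSpace.exp (-(z • a)))
      ⁅a, b⁆ 0 := by
  have hexp := hasDerivAt_exp_smul_const (𝕂 := ℂ) a 0
  have hexp_neg := hasDerivAt_exp_smul_const (𝕂 := ℂ) (-a) 0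
  simp only [smul_neg] at hexp_neg
  refine ((hexp.mul_const b).mul hexp_neg).congr_deriv ?_
  simp [Ring.lie_def, sub_eq_add_neg]

section Orbit

open scoped ComplexStarModule

variable {ι : Type*} [Fintype ι] [DecidableEq ι]

instance compactSpace_unitaryGroup : CompactSpace (unitaryGroup ι ℂ) := by
  refine isCompact_iff_compactSpace.mp <| IsCompact.of_isClosed_subset (X := ι → ι → ℂ)
    (isCompact_univ_pi fun _ => isCompact_univ_pi fun _ => isCompact_closedBall 0 1)
    (isClosed_unitary (R := Matrix ι ι ℂ)) fun U hU i _ j _ => ?_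
  simpa using entry_norm_bound_of_unitary hU i j

/-- The matrix coordinate `U ↦ tr(X U Y U⁻¹)` on the orbit of `Y` under unitary conjugation, as a
continuous function of `U` depending linearly on `X`. -/
noncomputable def orbitPairing (Y : Matrix ι ι ℂ) :
    Matrix ι ι ℂ →ₗ[ℂ] C(unitaryGroup ι ℂ, ℂ) where
  toFun X := ⟨fun U => trace (X * (U.1 * Y * star U.1)), by fun_prop⟩
  map_add' X X' := by ext U; simp [add_mul]
  map_smul' c X := by ext U; simp

lemma orbitPairing_apply (Y X : Matrix ι ι ℂ) (U : unitaryGroup ι ℂ) :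
    orbitPairing Y X U = trace (X * (U.1 * Y * star U.1)) := rfl

lemma orbitPairing_conj (Y X : Matrix ι ι ℂ) (V U : unitaryGroup ι ℂ) :
    orbitPairing Y (V.1 * X * star V.1) U = orbitPairing Y X (star V * U) := by
  simp only [orbitPairing_apply, Submonoid.coe_mul, star_mul, Unitary.coe_star, star_star,
    mul_assoc]
  rw [trace_mul_comm]
  simp only [mul_assoc]

lemma sum_orbitPairing_single_mul_single (Y : Matrix ι ι ℂ) :
    ∑ i, ∑ j, orbitPairing Y (single i j 1) * orbitPairing Y (single j i 1) =
      trace (Y * Y) • 1 := by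
  ext U
  have hsq : U.1 * Y * star U.1 * (U.1 * Y * star U.1) = U.1 * (Y * Y) * star U.1 := by
    simpa using (map_mul (Unitary.conjStarAlgAut ℂ (Matrix ι ι ℂ) U) Y Y).symm
  calc (∑ i, ∑ j, orbitPairing Y (single i j 1) * orbitPairing Y (single j i 1)) U
    _ = trace (U.1 * Y * star U.1 * (U.1 * Y * star U.1)) := by
      simp only [ContinuousMap.sum_apply, ContinuousMap.mul_apply, orbitPairing_apply,
        trace_single_mul, one_smul]
      simp only [trace, Matrix.diag_apply, mul_apply (M := U.1 * Y * star U.1)]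
      exact sum_comm
    _ = trace (Y * Y) := by
      rw [hsq, trace_mul_comm, ← mul_assoc, UnitaryGroup.star_mul_self, one_mul]
    _ = (trace (Y * Y) • 1 : C(unitaryGroup ι ℂ, ℂ)) U := by simp

open scoped Matrix.Norms.L2Operator in
lemma hasDerivAt_orbitPairing (Y : Matrix ι ι ℂ) {X : ℂ → Matrix ι ι ℂ} {X' : Matrix ι ι ℂ} {z : ℂ}
    (hX : HasDerivAt X X' z) :
    HasDerivAt (fun w => orbitPairing Y (X w)) (orbitPairing Y X') z :=
  (orbitPairing Y).toContinuousLinearMap.hasFDerivAt.comp_hasDerivAt z hX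

variable [MeasurableSpace (unitaryGroup ι ℂ)] [BorelSpace (unitaryGroup ι ℂ)]
  (μ : Measure (unitaryGroup ι ℂ))

/-- The angular integral `∫ e^{tr(X U Y U⁻¹)} dμ(U)` for arbitrary complex matrices `X` and `Y`. -/
noncomputable def angularIntegral (Y X : Matrix ι ι ℂ) : ℂ :=
  ∫ U : unitaryGroup ι ℂ, Complex.exp (trace (X * (U.1 * Y * star U.1))) ∂μ

variable [IsFiniteMeasure μ]

/-- The integral `∫ f(U) e^{tr(X U Y U⁻¹)} dμ(U)`, as a functional of the observable `f`. -/
noncomputable def tiltedIntegral (Y X : Matrix ι ι ℂ) : C(unitaryGroup ι ℂ, ℂ) →L[ℂ] ℂ :=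
  continuousMapIntegral μ ∘L ContinuousLinearMap.mul ℂ _ (NormedSpace.exp (orbitPairing Y X))

lemma tiltedIntegral_apply (Y X : Matrix ι ι ℂ) (f : C(unitaryGroup ι ℂ, ℂ)) :
    tiltedIntegral μ Y X f = ∫ U, Complex.exp (orbitPairing Y X U) * f U ∂μ := by
  simp [tiltedIntegral, continuousMapIntegral_apply, exp_continuousMap_apply]

lemma tiltedIntegral_one (Y X : Matrix ι ι ℂ) :
    tiltedIntegral μ Y X 1 = angularIntegral μ Y X := by
  simp [tiltedIntegral_apply, angularIntegral, orbitPairing_apply]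

lemma hasDerivAt_tiltedIntegral (Y : Matrix ι ι ℂ) {X : ℂ → Matrix ι ι ℂ} {X' : Matrix ι ι ℂ}
    {f : ℂ → C(unitaryGroup ι ℂ, ℂ)} {f' : C(unitaryGroup ι ℂ, ℂ)} {z : ℂ}
    (hX : HasDerivAt X X' z) (hf : HasDerivAt f f' z) :
    HasDerivAt (fun w => tiltedIntegral μ Y (X w) (f w))
      (tiltedIntegral μ Y (X z) (orbitPairing Y X' * f z + f')) z := by
  have hexp : HasDerivAt (fun w => NormedSpace.exp (orbitPairing Y (X w)))
      (NormedSpace.exp (orbitPairing Y (X z)) * orbitPairing Y X') z :=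
    hasDerivAt_exp_comp (hasDerivAt_orbitPairing Y hX)
  refine ((continuousMapIntegral μ).hasFDerivAt.comp_hasDerivAt z (hexp.mul hf)).congr_deriv ?_
  simp [tiltedIntegral, mul_add, mul_assoc]

lemma contDiff_angularIntegral_diagonal (Y : Matrix ι ι ℂ) {n : WithTop ℕ∞} :
    ContDiff ℂ n fun x : ι → ℂ => angularIntegral μ Y (diagonal x) := by
  have hexp : ContDiff ℂ n (NormedSpace.exp : C(unitaryGroup ι ℂ, ℂ) → C(unitaryGroup ι ℂ, ℂ)) :=
    contDiff_iff_contDiffAt.mpr fun f => (NormedSpace.exp_analytic (𝕂 := ℂ) f).contDiffAt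
  simpa [← tiltedIntegral_one, tiltedIntegral] using!
    (continuousMapIntegral μ).contDiff.comp <| hexp.comp
      (orbitPairing Y ∘ₗ diagonalLinearMap ι ℂ ℂ).toContinuousLinearMap.contDiff

open scoped Matrix.Norms.L2Operator in
lemma hasDerivAt_tiltedIntegral_diagonal_update (Y : Matrix ι ι ℂ) (x : ι → ℂ) (i : ι)
    (f : C(unitaryGroup ι ℂ, ℂ)) (z : ℂ) :
    HasDerivAt (fun w => tiltedIntegral μ Y (diagonal (update x i w)) f)
      (tiltedIntegral μ Y (diagonal (update x i z)) (orbitPairing Y (single i i 1) * f)) z := by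
  have hdiag : HasDerivAt (fun w => diagonal (update x i w)) (single i i (1 : ℂ)) z := by
    rw [← diagonal_single]
    exact (diagonalLinearMap ι ℂ ℂ).toContinuousLinearMap.hasFDerivAt.comp_hasDerivAt z
      (hasDerivAt_update x i z)
  simpa using hasDerivAt_tiltedIntegral μ Y hdiag (hasDerivAt_const z f)

lemma deriv_angularIntegral_diagonal_update (Y : Matrix ι ι ℂ) (x : ι → ℂ) (i : ι) :
    deriv (fun w => angularIntegral μ Y (diagonal (update x i w))) =
      fun z => tiltedIntegral μ Y (diagonal (update x i z)) (orbitPairing Y (single i i 1)) := by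
  funext z
  simpa [← tiltedIntegral_one] using (hasDerivAt_tiltedIntegral_diagonal_update μ Y x i 1 z).deriv

lemma iteratedDeriv_two_angularIntegral_diagonal_update (Y : Matrix ι ι ℂ) (x : ι → ℂ) (i : ι) :
    iteratedDeriv 2 (fun w => angularIntegral μ Y (diagonal (update x i w))) =
      fun z => tiltedIntegral μ Y (diagonal (update x i z))
        (orbitPairing Y (single i i 1) * orbitPairing Y (single i i 1)) := by
  rw [iteratedDeriv_succ, iteratedDeriv_one, deriv_angularIntegral_diagonal_update]
  funext z
  exact (hasDerivAt_tiltedIntegral_diagonal_update μ Y x i _ z).deriv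

section Ward

variable [μ.IsMulLeftInvariant]

lemma tiltedIntegral_conj (Y X B : Matrix ι ι ℂ) (V : unitaryGroup ι ℂ) :
    tiltedIntegral μ Y (V.1 * X * star V.1) (orbitPairing Y (V.1 * B * star V.1)) =
      tiltedIntegral μ Y X (orbitPairing Y B) := by
  simp only [tiltedIntegral_apply, orbitPairing_conj]
  exact integral_mul_left_eq_self
    (fun U => Complex.exp (orbitPairing Y X U) * orbitPairing Y B U) (star V)

lemma tiltedIntegral_lie_of_mem_skewAdjoint (Y X B : Matrix ι ι ℂ) {A : Matrix ι ι ℂ}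
    (hA : A ∈ skewAdjoint (Matrix ι ι ℂ)) :
    tiltedIntegral μ Y X
      (orbitPairing Y ⁅A, X⁆ * orbitPairing Y B + orbitPairing Y ⁅A, B⁆) = 0 := by
  open scoped Matrix.Norms.L2Operator in
  let : NormedAlgebra ℚ (Matrix ι ι ℂ) := .restrictScalars ℚ ℂ _
  have hskew (t : ℝ) : (t : ℂ) • A ∈ skewAdjoint (Matrix ι ι ℂ) := by
    rw [Complex.coe_smul]
    exact skewAdjoint.smul_mem t hA
  have hconst (t : ℝ) := tiltedIntegral_conj μ Y X B
    ⟨_, NormedSpace.exp_mem_unitary_of_mem_skewAdjoint (hskew t)⟩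
  simp only [NormedSpace.star_exp, skewAdjoint.mem_iff.mp (hskew _)] at hconst
  have hderiv := hasDerivAt_tiltedIntegral μ Y (hasDerivAt_exp_smul_mul_mul_exp_neg_smul A X)
    (hasDerivAt_orbitPairing Y (hasDerivAt_exp_smul_mul_mul_exp_neg_smul A B))
  rw [← Complex.ofReal_zero] at hderiv
  have hderiv_real := hderiv.comp_ofReal
  simp only [hconst] at hderiv_real
  simpa using hderiv_real.unique (hasDerivAt_const _ _)

lemma tiltedIntegral_lie (Y X B A : Matrix ι ι ℂ) :
    tiltedIntegral μ Y X
      (orbitPairing Y ⁅A, X⁆ * orbitPairing Y B + orbitPairing Y ⁅A, B⁆) = 0 := by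
  have hself {S : Matrix ι ι ℂ} (hS : IsSelfAdjoint S) : tiltedIntegral μ Y X
      (orbitPairing Y ⁅S, X⁆ * orbitPairing Y B + orbitPairing Y ⁅S, B⁆) = 0 := by
    have h := tiltedIntegral_lie_of_mem_skewAdjoint μ Y X B (hS.smul_mem_skewAdjoint Complex.conj_I)
    simpa only [Ring.lie_def, smul_mul_assoc, mul_smul_comm, ← smul_sub, map_smul, ← smul_add,
      smul_eq_zero, Complex.I_ne_zero, false_or] using h
  rw [← realPart_add_I_smul_imaginaryPart A]
  have hre := hself (ℜ A).2
  have him := hself (ℑ A).2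
  simp only [Ring.lie_def, add_mul, sub_mul, mul_add, smul_mul_assoc, mul_smul_comm, map_add,
    map_sub, map_smul, smul_eq_mul] at hre him ⊢
  linear_combination hre + Complex.I * him

lemma tiltedIntegral_diagonal_sub (Y : Matrix ι ι ℂ) (x : ι → ℂ) (i j : ι) :
    tiltedIntegral μ Y (diagonal x) (orbitPairing Y (single i i 1)) -
        tiltedIntegral μ Y (diagonal x) (orbitPairing Y (single j j 1)) =
      (x i - x j) * tiltedIntegral μ Y (diagonal x)
        (orbitPairing Y (single i j 1) * orbitPairing Y (single j i 1)) := by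
  have hx : ⁅single i j (1 : ℂ), diagonal x⁆ = (x j - x i) • single i j (1 : ℂ) := by
    ext a b
    by_cases h : i = a ∧ j = b
    · obtain ⟨rfl, rfl⟩ := h
      simp [Ring.lie_def, mul_comm]
    · simp [Ring.lie_def, h]
  have hB : ⁅single i j (1 : ℂ), single j i (1 : ℂ)⁆ = single i i 1 - single j j 1 := by
    simp [Ring.lie_def]
  have h := tiltedIntegral_lie μ Y (diagonal x) (single j i 1) (single i j 1)
  rw [hx, hB] at h
  simp only [map_smul, map_sub, map_add, smul_mul_assoc, smul_eq_mul] at h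
  linear_combination h

theorem statement14_general (Y : Matrix ι ι ℂ) :
    ContDiff ℂ (⊤ : ℕ∞) (fun x : ι → ℂ => angularIntegral μ Y (diagonal x)) ∧
    ∀ x : ι → ℂ, Injective x →
      (∑ i, iteratedDeriv 2 (fun z => angularIntegral μ Y (diagonal (update x i z))) (x i)) +
        (∑ i, ∑ j ∈ univ.erase i, (1 / (x i - x j)) *
          (deriv (fun z => angularIntegral μ Y (diagonal (update x i z))) (x i) -
            deriv (fun z => angularIntegral μ Y (diagonal (update x j z))) (x j))) =
      trace (Y * Y) * angularIntegral μ Y (diagonal x) := by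
  refine ⟨contDiff_angularIntegral_diagonal μ Y, fun x hx => ?_⟩
  let T (i j : ι) : ℂ := tiltedIntegral μ Y (diagonal x)
    (orbitPairing Y (single i j 1) * orbitPairing Y (single j i 1))
  have hT {i j : ι} (hj : j ∈ univ.erase i) : 1 / (x i - x j) * ((x i - x j) * T i j) = T i j := by
    have : x i - x j ≠ 0 := sub_ne_zero.mpr (hx.ne (ne_of_mem_erase hj).symm)
    field_simp
  have hsum : ∑ i, ∑ j, T i j = trace (Y * Y) * angularIntegral μ Y (diagonal x) := by
    simp only [T, ← map_sum, sum_orbitPairing_single_mul_single, map_smul, tiltedIntegral_one,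
      smul_eq_mul]
  simp only [iteratedDeriv_two_angularIntegral_diagonal_update,
    deriv_angularIntegral_diagonal_update, update_eq_self, tiltedIntegral_diagonal_sub]
  rw [← hsum, ← sum_add_distrib]
  refine sum_congr rfl fun i _ => ?_
  rw [sum_congr rfl fun j hj => hT hj, add_sum_erase _ (T i) (mem_univ i)]

end Ward

end Orbit

section AngInt

variable {n : ℕ}

instance borelSpace_matrix_fin : BorelSpace (Matrix (Fin n) (Fin n) ℂ) :=
  inferInstanceAs (BorelSpace (Fin n → Fin n → ℂ))

instance borelSpace_unitaryGroup_fin : BorelSpace (unitaryGroup (Fin n) ℂ) :=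
  Subtype.borelSpace _

lemma ofReal_re_trace_mul_of_isHermitian {ι : Type*} [Fintype ι] {A B : Matrix ι ι ℂ}
    (hA : A.IsHermitian) (hB : B.IsHermitian) : ((trace (A * B)).re : ℂ) = trace (A * B) := by
  rw [← Complex.conj_eq_iff_re, ← Complex.star_def, ← trace_conjTranspose, conjTranspose_mul,
    hA.eq, hB.eq, trace_mul_comm]

variable (μ : Measure (unitaryGroup (Fin n) ℂ)) (y x : Fin n → ℝ)

lemma angularIntegral_diagonal_ofReal :
    angularIntegral μ (diagonal fun l => (y l : ℂ)) (diagonal fun l => (x l : ℂ)) =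
      angInt n μ y x := by
  have hdiag (v : Fin n → ℝ) : (diagonal fun l => (v l : ℂ)).IsHermitian :=
    isHermitian_diagonal_of_self_adjoint _ (funext fun l => Complex.conj_ofReal (v l))
  rw [angularIntegral, angInt, ← integral_complex_ofReal]
  refine integral_congr_ae (.of_forall fun U => ?_)
  have hreal := ofReal_re_trace_mul_of_isHermitian (hdiag x)
    (isHermitian_mul_mul_conjTranspose U.1 (hdiag y))
  simp only [Complex.ofReal_exp, mul_assoc] at hreal ⊢
  exact congrArg Complex.exp hreal.symm

lemma angularIntegral_diagonal_update_ofReal (i : Fin n) (t : ℝ) :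
    angularIntegral μ (diagonal fun l => (y l : ℂ)) (diagonal (update (fun l => (x l : ℂ)) i t)) =
      angInt n μ y (update x i t) := by
  rw [← angularIntegral_diagonal_ofReal]
  congr 2
  exact (comp_update Complex.ofReal x i t).symm

variable [IsFiniteMeasure μ]

lemma contDiff_angInt {k : WithTop ℕ∞} : ContDiff ℝ k (angInt n μ y) := by
  have hofReal : ContDiff ℝ k fun (x : Fin n → ℝ) l => (x l : ℂ) :=
    contDiff_pi.mpr fun l => Complex.ofRealCLM.contDiff.comp (contDiff_apply ℝ ℝ l)
  have hre := Complex.reCLM.contDiff.comp <| ((contDiff_angularIntegral_diagonal μ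
    (diagonal fun l => (y l : ℂ))).restrict_scalars ℝ).comp hofReal
  simpa [Function.comp_def, angularIntegral_diagonal_ofReal] using hre

lemma iteratedDeriv_angularIntegral_diagonal_update_ofReal (k : ℕ) (i : Fin n) (t : ℝ) :
    iteratedDeriv k (fun z => angularIntegral μ (diagonal fun l => (y l : ℂ))
      (diagonal (update (fun l => (x l : ℂ)) i z))) t =
      iteratedDeriv k (fun s => angInt n μ y (update x i s)) t := by
  refine iteratedDeriv_eq_ofReal_iteratedDeriv
    (angularIntegral_diagonal_update_ofReal μ y x i) (fun z => ?_) k t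
  simpa only [← tiltedIntegral_one] using
    (hasDerivAt_tiltedIntegral_diagonal_update μ _ _ i 1 z).differentiableAt

end AngInt

/-- Calogero equation for the angular integral, `β = 1`: for the Haar
probability measure `μ` on `U(n)`, the angular integral `I` is smooth, and at every `x`
with pairwise distinct entries,
`Σᵢ ∂²I/∂xᵢ² + Σ_{i≠j} (∂I/∂xᵢ − ∂I/∂xⱼ)/(xᵢ−xⱼ) = (Σⱼ yⱼ²) I(x)`. -/
theorem statement14 (n : ℕ) (hn : 1 ≤ n) (μ : Measure (Matrix.unitaryGroup (Fin n) ℂ))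
    [μ.IsHaarMeasure] [IsProbabilityMeasure μ] (y : Fin n → ℝ) :
    ContDiff ℝ (⊤ : ℕ∞) (angInt n μ y) ∧
    ∀ x : Fin n → ℝ, (∀ i j : Fin n, i ≠ j → x i ≠ x j) →
      (∑ i : Fin n, iteratedDeriv 2 (fun t => angInt n μ y (Function.update x i t)) (x i)) +
        (∑ i : Fin n, ∑ j ∈ Finset.univ.erase i,
          (1 / (x i - x j)) *
            (deriv (fun t => angInt n μ y (Function.update x i t)) (x i) -
              deriv (fun t => angInt n μ y (Function.update x j t)) (x j))) =
      (∑ j : Fin n, (y j) ^ 2) * angInt n μ y x := by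
  refine ⟨contDiff_angInt μ y, fun x hx => ?_⟩
  have hcalogero := (statement14_general μ (diagonal fun l => (y l : ℂ))).2
    (fun l => (x l : ℂ)) (Complex.ofReal_injective.comp fun i j => not_imp_not.mp (hx i j))
  simp only [← iteratedDeriv_one, sq] at hcalogero ⊢
  simp only [iteratedDeriv_angularIntegral_diagonal_update_ofReal, angularIntegral_diagonal_ofReal,
    diagonal_mul_diagonal, trace_diagonal] at hcalogero
  exact_mod_cast hcalogero
end

section
/- Let n ≥ 1, let β > 0 be a real number, let V be a real polynomial of even degree ≥ 2 with positive leading coefficient, and let k ≥ 1 be an integer. Then ∫_{ℝⁿ} [ Σ_{i=1}^{n} k λ_i^{k−1} + 2β Σ_{1≤i<j≤n} Σ_{l=0}^{k−1} λ_i^{l} λ_j^{k−1−l} − Σ_{i=1}^{n} λ_i^{k} V'(λ_i) ] · ∏_{1≤i<j≤n} |λ_j − λ_i|^{2β} · e^{−Σ_{i=1}^{n} V(λ_i)} dλ₁⋯dλ_n = 0, where V' is the derivative of V; moreover the integrand is absolutely integrable over ℝⁿ. -/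
open MeasureTheory Finset Real

/-- The integrand of the first loop (Schwinger–Dyson) equation of the one-matrix
`β`-ensemble with potential `V`, arising from the change of variables
`λᵢ → λᵢ + ε λᵢᵏ`. -/
noncomputable def loopIntegrand (n : ℕ) (β : ℝ) (V : Polynomial ℝ) (k : ℕ)
    (l : Fin n → ℝ) : ℝ :=
  ((∑ i : Fin n, (k : ℝ) * l i ^ (k - 1)) +
      2 * β * ∑ i : Fin n, ∑ j ∈ Finset.univ.filter (fun j => i < j),
        ∑ m ∈ Finset.range k, l i ^ m * l j ^ (k - 1 - m) -
      ∑ i : Fin n, l i ^ k * (Polynomial.derivative V).eval (l i)) *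
    ((∏ i : Fin n, ∏ j ∈ Finset.univ.filter (fun j => i < j), |l j - l i| ^ (2 * β)) *
      Real.exp (-∑ i : Fin n, V.eval (l i)))

/-! Integrating by parts against the vector field `λᵢ ↦ λᵢᵏ` asks for a differentiable density,
and `|λⱼ - λᵢ| ^ (2β)` is not differentiable on the diagonals when `β` is small. Soften it to
`(|λⱼ - λᵢ| ^ 2 + ε) ^ β` with `ε > 0`: the density becomes smooth and its logarithmic gradient
grows polynomially, so integration by parts is legitimate and produces the loop equation with
`2β (λᵢᵏ - λⱼᵏ) / (λᵢ - λⱼ)` replaced by `2β (λⱼ - λᵢ) (λⱼᵏ - λᵢᵏ) / ((λⱼ - λᵢ) ^ 2 + ε)`. The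
softened quotient never exceeds the true one in absolute value, and the softened density increases
with `ε`, so for `0 < ε ≤ 1` everything is dominated by a polynomial times the density at `ε = 1`,
and `ε → 0` is dominated convergence. -/

open Filter Topology Asymptotics

section PolynomialGrowth

variable {E F G : Type*} [SeminormedAddCommGroup E] [SeminormedAddCommGroup F]
  [SeminormedAddCommGroup G]

/-- A map between normed spaces has polynomial growth if some power of `1 + ‖x‖` dominates it on
the whole space. Unlike `Function.HasTemperateGrowth`, this asks for no regularity, so that it
applies to derivatives and to the non-smooth factors `|λⱼ - λᵢ| ^ (2β)`. -/
@[fun_prop]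
def HasPolynomialGrowth (f : E → F) : Prop :=
  ∃ m : ℕ, f =O[⊤] fun x ↦ (1 + ‖x‖) ^ m

lemma isBigO_one_add_norm_pow_of_le {m m' : ℕ} (h : m ≤ m') :
    (fun x : E ↦ (1 + ‖x‖) ^ m) =O[⊤] fun x ↦ (1 + ‖x‖) ^ m' :=
  .pow_of_le_right (Eventually.of_forall fun x ↦ le_add_of_nonneg_right (norm_nonneg x)) h

lemma hasPolynomialGrowth_iff {f : E → F} : HasPolynomialGrowth f ↔
    ∃ m : ℕ, ∃ C, 0 ≤ C ∧ ∀ x, ‖f x‖ ≤ C * (1 + ‖x‖) ^ m := by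
  refine exists_congr fun m ↦ isBigO_iff'.trans ?_
  have hnorm (x : E) : ‖(1 + ‖x‖) ^ m‖ = (1 + ‖x‖) ^ m := norm_of_nonneg (by positivity)
  simp only [hnorm, eventually_top]
  exact ⟨fun ⟨C, hC, h⟩ ↦ ⟨C, hC.le, h⟩, fun ⟨C, hC, h⟩ ↦ ⟨C + 1, by positivity, fun x ↦
    (h x).trans (by gcongr; linarith)⟩⟩

namespace HasPolynomialGrowth

lemma mono {f : E → F} {g : E → G} (hg : HasPolynomialGrowth g) (h : ∀ x, ‖f x‖ ≤ ‖g x‖) :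
    HasPolynomialGrowth f :=
  let ⟨m, hm⟩ := hg
  ⟨m, (IsBigO.of_norm_le h).trans hm.norm_left⟩

@[fun_prop]
lemma const (c : F) : HasPolynomialGrowth fun _ : E ↦ c :=
  ⟨0, by simpa using isBigO_const_const c (one_ne_zero (α := ℝ)) ⊤⟩

@[fun_prop]
lemma id : HasPolynomialGrowth fun x : E ↦ x :=
  ⟨1, .of_norm_le fun x ↦ by simp⟩

@[fun_prop]
lemma comp {g : F → G} {f : E → F} (hg : HasPolynomialGrowth g) (hf : HasPolynomialGrowth f) :
    HasPolynomialGrowth fun x ↦ g (f x) := by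
  obtain ⟨m, hm⟩ := hg
  obtain ⟨m', hm'⟩ := hf
  refine ⟨m' * m, (hm.comp_tendsto tendsto_top).trans ?_⟩
  simp only [pow_mul]
  exact (((isBigO_one_add_norm_pow_of_le (Nat.zero_le m')).congr_left (by simp)).add
    hm'.norm_left).pow m

@[fun_prop]
lemma apply {ι : Type*} [Fintype ι] {X : ι → Type*} [∀ i, SeminormedAddCommGroup (X i)] (i : ι) :
    HasPolynomialGrowth fun x : ∀ i, X i ↦ x i :=
  id.mono (norm_le_pi_norm · i)

@[fun_prop]
lemma prodMk {f : E → F} {g : E → G} (hf : HasPolynomialGrowth f) (hg : HasPolynomialGrowth g) :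
    HasPolynomialGrowth fun x ↦ (f x, g x) := by
  obtain ⟨m, hm⟩ := hf
  obtain ⟨m', hm'⟩ := hg
  exact ⟨max m m', (hm.trans (isBigO_one_add_norm_pow_of_le (le_max_left ..))).prod_left
    (hm'.trans (isBigO_one_add_norm_pow_of_le (le_max_right ..)))⟩

@[fun_prop]
lemma add {f g : E → F} (hf : HasPolynomialGrowth f) (hg : HasPolynomialGrowth g) :
    HasPolynomialGrowth fun x ↦ f x + g x := by
  obtain ⟨m, hm⟩ := hf
  obtain ⟨m', hm'⟩ := hg
  exact ⟨max m m', (hm.trans (isBigO_one_add_norm_pow_of_le (le_max_left ..))).add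
    (hm'.trans (isBigO_one_add_norm_pow_of_le (le_max_right ..)))⟩

@[fun_prop]
lemma neg {f : E → F} (hf : HasPolynomialGrowth f) : HasPolynomialGrowth fun x ↦ -f x :=
  hf.mono fun x ↦ (norm_neg (f x)).le

@[fun_prop]
lemma sub {f g : E → F} (hf : HasPolynomialGrowth f) (hg : HasPolynomialGrowth g) :
    HasPolynomialGrowth fun x ↦ f x - g x := by
  simpa only [sub_eq_add_neg] using hf.add hg.neg

@[fun_prop]
lemma norm {f : E → F} (hf : HasPolynomialGrowth f) : HasPolynomialGrowth fun x ↦ ‖f x‖ :=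
  hf.mono fun x ↦ (norm_norm (f x)).le

@[fun_prop]
lemma mul {𝕜 : Type*} [SeminormedRing 𝕜] {f g : E → 𝕜} (hf : HasPolynomialGrowth f)
    (hg : HasPolynomialGrowth g) : HasPolynomialGrowth fun x ↦ f x * g x := by
  obtain ⟨m, hm⟩ := hf
  obtain ⟨m', hm'⟩ := hg
  exact ⟨m + m', by simpa only [pow_add] using hm.mul hm'⟩

@[fun_prop]
lemma pow {𝕜 : Type*} [SeminormedRing 𝕜] {f : E → 𝕜} (hf : HasPolynomialGrowth f) (k : ℕ) :
    HasPolynomialGrowth fun x ↦ f x ^ k := by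
  induction k with
  | zero => simpa only [pow_zero] using const 1
  | succ k ih => simpa only [pow_succ] using ih.mul hf

@[fun_prop]
lemma sum {ι : Type*} {s : Finset ι} {f : ι → E → F} (h : ∀ i ∈ s, HasPolynomialGrowth (f i)) :
    HasPolynomialGrowth fun x ↦ ∑ i ∈ s, f i x := by
  simpa only [Finset.sum_fn] using
    Finset.sum_induction f HasPolynomialGrowth (fun _ _ ↦ add) (const 0) h

@[fun_prop]
lemma prod {𝕜 ι : Type*} [SeminormedCommRing 𝕜] {s : Finset ι} {f : ι → E → 𝕜}
    (h : ∀ i ∈ s, HasPolynomialGrowth (f i)) : HasPolynomialGrowth fun x ↦ ∏ i ∈ s, f i x := by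
  simpa only [Finset.prod_fn] using
    Finset.prod_induction f HasPolynomialGrowth (fun _ _ ↦ mul) (const 1) h

@[fun_prop]
lemma rpow_const {f : E → ℝ} {b : ℝ} (hf : HasPolynomialGrowth f) (hb : 0 ≤ b) :
    HasPolynomialGrowth fun x ↦ f x ^ b := by
  refine HasPolynomialGrowth.mono (g := fun x ↦ (1 + ‖f x‖) ^ ⌈b⌉₊) (by fun_prop) fun x ↦ ?_
  have hf0 : 0 ≤ ‖f x‖ := norm_nonneg _
  calc ‖f x ^ b‖ ≤ ‖f x‖ ^ b := abs_rpow_le_abs_rpow _ _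
    _ ≤ (1 + ‖f x‖) ^ b := rpow_le_rpow hf0 (by linarith) hb
    _ ≤ (1 + ‖f x‖) ^ (⌈b⌉₊ : ℝ) := rpow_le_rpow_of_exponent_le (by linarith) (Nat.le_ceil b)
    _ ≤ ‖(1 + ‖f x‖) ^ ⌈b⌉₊‖ := by rw [rpow_natCast]; exact le_norm_self _

lemma eval (P : Polynomial ℝ) : HasPolynomialGrowth fun x ↦ P.eval x := by
  simp only [Polynomial.eval_eq_sum_range]
  fun_prop

section Slope

variable {F : Type*} [NormedAddCommGroup F] [NormedSpace ℝ F] {f : ℝ → F}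

lemma slope (hf : Differentiable ℝ f) (hf' : HasPolynomialGrowth (deriv f)) :
    HasPolynomialGrowth fun p : ℝ × ℝ ↦ slope f p.1 p.2 := by
  obtain ⟨m, C, hC, hbound⟩ := hasPolynomialGrowth_iff.1 hf'
  refine hasPolynomialGrowth_iff.2 ⟨m, C, hC, fun p ↦ ?_⟩
  have hderiv : ∀ z ∈ Metric.closedBall (0 : ℝ) ‖p‖, ‖deriv f z‖ ≤ C * (1 + ‖p‖) ^ m := by
    intro z hz
    rw [mem_closedBall_zero_iff] at hz
    exact (hbound z).trans (by gcongr)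
  have hsub : ‖f p.2 - f p.1‖ ≤ C * (1 + ‖p‖) ^ m * ‖p.2 - p.1‖ :=
    Convex.norm_image_sub_le_of_norm_deriv_le (fun z _ ↦ hf z) hderiv (convex_closedBall 0 _)
      (by simpa using norm_fst_le p) (by simpa using norm_snd_le p)
  rw [slope_def_module, norm_smul, norm_inv, inv_mul_eq_div]
  exact div_le_of_le_mul₀ (norm_nonneg _) (by positivity) hsub

lemma of_deriv (hf : Differentiable ℝ f) (hf' : HasPolynomialGrowth (deriv f)) :
    HasPolynomialGrowth f := by
  have hslope := (slope hf hf').comp ((const 0).prodMk id)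
  refine HasPolynomialGrowth.mono
    (g := fun x ↦ ‖f 0‖ + ‖x‖ * ‖_root_.slope f 0 x‖) (by fun_prop) fun x ↦ ?_
  calc ‖f x‖ = ‖x • _root_.slope f 0 x + f 0‖ := by
        rw [← sub_smul_slope_vadd f 0 x, sub_zero, vadd_eq_add]
    _ ≤ ‖f 0‖ + ‖x‖ * ‖_root_.slope f 0 x‖ := by
        rw [add_comm, ← norm_smul]
        exact norm_add_le _ _
    _ ≤ _ := le_norm_self _

end Slope

end HasPolynomialGrowth

end PolynomialGrowth

section Integrability

lemma isLittleO_eval_exp_eval_atTop (P : Polynomial ℝ) {V : Polynomial ℝ} (hdeg : 0 < V.natDegree)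
    (hlead : 0 ≤ V.leadingCoeff) :
    (fun x ↦ P.eval x) =o[atTop] fun x ↦ exp (V.eval x) := by
  have hV : Tendsto (fun x ↦ V.eval x) atTop atTop :=
    V.tendsto_atTop_of_leadingCoeff_nonneg (Polynomial.natDegree_pos_iff_degree_pos.1 hdeg) hlead
  have hPV : P.degree ≤ (V ^ P.natDegree).degree := by
    rw [Polynomial.degree_eq_natDegree (pow_ne_zero _ (Polynomial.ne_zero_of_natDegree_gt hdeg)),
      Polynomial.natDegree_pow]
    exact Polynomial.degree_le_of_natDegree_le (Nat.le_mul_of_pos_right _ hdeg)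
  refine (Polynomial.isBigO_atTop_of_degree_le _ _ hPV).trans_isLittleO ?_
  simpa only [Polynomial.eval_pow, Function.comp_def] using
    isLittleO_pow_exp_atTop.comp_tendsto hV

lemma isLittleO_eval_exp_eval_cocompact (P : Polynomial ℝ) {V : Polynomial ℝ}
    (hdeg : 0 < V.natDegree) (heven : Even V.natDegree) (hlead : 0 ≤ V.leadingCoeff) :
    (fun x ↦ P.eval x) =o[cocompact ℝ] fun x ↦ exp (V.eval x) := by
  rw [cocompact_eq_atBot_atTop, isLittleO_sup]
  refine ⟨?_, isLittleO_eval_exp_eval_atTop P hdeg hlead⟩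
  have hreflect := isLittleO_eval_exp_eval_atTop (P.comp (-Polynomial.X))
    (V := V.comp (-Polynomial.X)) (by simpa [Polynomial.natDegree_comp] using hdeg)
    (by simpa [Polynomial.leadingCoeff_comp, heven.neg_one_pow] using hlead)
  simpa [Function.comp_def] using hreflect.comp_tendsto tendsto_neg_atBot_atTop

lemma integrable_eval_mul_exp_neg_eval (P : Polynomial ℝ) {V : Polynomial ℝ}
    (hdeg : 0 < V.natDegree) (heven : Even V.natDegree) (hlead : 0 ≤ V.leadingCoeff) :
    Integrable fun x ↦ P.eval x * exp (-V.eval x) := by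
  have hcont : Continuous fun x ↦ P.eval x * exp (-V.eval x) := by fun_prop
  refine hcont.locallyIntegrable.integrable_of_isBigO_cocompact (g := fun x : ℝ ↦ (1 + x ^ 2)⁻¹)
    ?_ (integrable_inv_one_add_sq.integrableAtFilter _)
  have hpos (x : ℝ) : 0 < 1 + x ^ 2 := by positivity
  have hO := isLittleO_eval_exp_eval_cocompact (P * (1 + .X ^ 2)) hdeg heven hlead
  refine (hO.isBigO.mul (isBigO_refl (fun x : ℝ ↦ exp (-V.eval x) * (1 + x ^ 2)⁻¹) _)).congr
    (fun x ↦ ?_) (fun x ↦ ?_)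
  · have := (hpos x).ne'
    simp only [Polynomial.eval_mul, Polynomial.eval_add, Polynomial.eval_one, Polynomial.eval_pow,
      Polynomial.eval_X]
    field_simp
  · rw [← mul_assoc, ← exp_add, add_neg_cancel, exp_zero, one_mul]

variable {ι : Type*} [Fintype ι]

lemma one_add_norm_le_prod {X : ι → Type*} [∀ i, SeminormedAddCommGroup (X i)] (l : ∀ i, X i) :
    1 + ‖l‖ ≤ ∏ i, (1 + ‖l i‖) := by
  classical
  have hle (s : Finset ι) : 1 ≤ ∏ i ∈ s, (1 + ‖l i‖) := Finset.one_le_prod fun i _ ↦ by simp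
  suffices ‖l‖ ≤ ∏ i, (1 + ‖l i‖) - 1 by linarith
  refine (pi_norm_le_iff_of_nonneg (by linarith [hle univ])).2 fun i ↦ ?_
  rw [← Finset.mul_prod_erase _ _ (Finset.mem_univ i)]
  have := le_mul_of_one_le_right (by positivity : 0 ≤ 1 + ‖l i‖) (hle (univ.erase i))
  linarith

lemma HasPolynomialGrowth.integrable_mul_prod {w : ι → ℝ → ℝ} {F : (ι → ℝ) → ℝ}
    (hF : HasPolynomialGrowth F) (hFm : AEStronglyMeasurable F)
    (hw : ∀ i, ∀ m : ℕ, Integrable fun x ↦ x ^ m * w i x) :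
    Integrable fun l ↦ F l * ∏ i, w i (l i) := by
  have hw' (m : ℕ) (i : ι) : Integrable fun x ↦ (1 + ‖x‖) ^ m * ‖w i x‖ := by
    have hterm (k : ℕ) : Integrable fun x ↦ ‖x‖ ^ k * ‖w i x‖ := by
      simpa only [norm_mul, norm_pow] using (hw i k).norm
    simp only [add_comm (1 : ℝ), add_pow, one_pow, mul_one, Finset.sum_mul]
    exact integrable_finsetSum _ fun k _ ↦
      ((hterm k).const_mul _).congr (.of_forall fun x ↦ by ring)
  obtain ⟨m, C, hC, hbound⟩ := hasPolynomialGrowth_iff.1 hF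
  have hdom := (Integrable.fintype_prod fun i ↦ hw' m i).const_mul C
  refine hdom.mono' (hFm.mul ?_) (.of_forall fun l ↦ ?_)
  · exact (Integrable.fintype_prod fun i ↦ by simpa using hw i 0).aestronglyMeasurable
  · calc ‖F l * ∏ i, w i (l i)‖ ≤ C * (∏ i, (1 + ‖l i‖)) ^ m * ∏ i, ‖w i (l i)‖ := by
          rw [norm_mul, norm_prod]
          gcongr
          exact (hbound l).trans (by gcongr; exact one_add_norm_le_prod l)
      _ = C * ∏ i, (1 + ‖l i‖) ^ m * ‖w i (l i)‖ := by
          rw [Finset.prod_mul_distrib, Finset.prod_pow, mul_assoc]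

end Integrability

section LoopEquation

lemma hasFDerivAt_comp_eval {ι : Type*} [Finite ι] {f : ℝ → ℝ} {i : ι} {l : ι → ℝ}
    (hf : DifferentiableAt ℝ f (l i)) :
    HasFDerivAt (fun l : ι → ℝ ↦ f (l i)) (deriv f (l i) • .proj (R := ℝ) i) l := by
  cases nonempty_fintype ι
  exact hf.hasDerivAt.comp_hasFDerivAt l (hasFDerivAt_apply i l)

variable {ι : Type*} [Fintype ι]

lemma integral_sum_deriv_mul_add_fderiv_eq_zero [DecidableEq ι] {f : ι → ℝ → ℝ} {w : (ι → ℝ) → ℝ}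
    (hf : ∀ i, Differentiable ℝ (f i)) (hw : Differentiable ℝ w)
    (hfw : ∀ i, Integrable fun l ↦ f i (l i) * w l)
    (hf'w : ∀ i, Integrable fun l ↦ deriv (f i) (l i) * w l)
    (hfw' : ∀ i, Integrable fun l ↦ f i (l i) * fderiv ℝ w l (Pi.single i 1)) :
    ∫ l, (∑ i, deriv (f i) (l i)) * w l + fderiv ℝ w l (fun i ↦ f i (l i)) = 0 := by
  have hfderiv (i : ι) (l : ι → ℝ) :
      fderiv ℝ (fun l : ι → ℝ ↦ f i (l i)) l (Pi.single i 1) = deriv (f i) (l i) := by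
    simp [(hasFDerivAt_comp_eval (hf i (l i))).fderiv]
  have hparts (i : ι) :
      ∫ l, f i (l i) * fderiv ℝ w l (Pi.single i 1) = -∫ l, deriv (f i) (l i) * w l := by
    rw [integral_mul_fderiv_eq_neg_fderiv_mul_of_integrable (by simpa only [hfderiv] using hf'w i)
      (hfw' i) (hfw i) (fun l _ ↦ (hasFDerivAt_comp_eval (hf i (l i))).differentiableAt)
      (fun l _ ↦ hw l)]
    simp only [hfderiv]
  have hsum (l : ι → ℝ) : (∑ i, deriv (f i) (l i)) * w l + fderiv ℝ w l (fun i ↦ f i (l i)) =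
      ∑ i, (deriv (f i) (l i) * w l + f i (l i) * fderiv ℝ w l (Pi.single i 1)) := by
    rw [Finset.sum_add_distrib, Finset.sum_mul, ← Finset.univ_sum_single fun i ↦ f i (l i), map_sum]
    congr 1
    refine Finset.sum_congr rfl fun i _ ↦ ?_
    rw [← smul_eq_mul, ← map_smul, ← Pi.single_smul, smul_eq_mul, mul_one]
  have hsummand (i : ι) : Integrable fun l ↦
      deriv (f i) (l i) * w l + f i (l i) * fderiv ℝ w l (Pi.single i 1) :=
    (hf'w i).add (hfw' i)
  simp only [hsum]
  rw [integral_finsetSum _ fun i _ ↦ hsummand i]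
  refine Finset.sum_eq_zero fun i _ ↦ ?_
  rw [integral_add (hf'w i) (hfw' i), hparts, add_neg_cancel]

/-- The Vandermonde factor `∏ |λⱼ - λᵢ| ^ (2β)` over the pairs `(i, j) ∈ P`, with each
`|λⱼ - λᵢ| ^ 2` softened to `|λⱼ - λᵢ| ^ 2 + ε`. -/
noncomputable def softVandermonde (P : Finset (ι × ι)) (β ε : ℝ) (l : ι → ℝ) : ℝ :=
  ∏ p ∈ P, ((l p.2 - l p.1) ^ 2 + ε) ^ β

/-- The unnormalized `β`-ensemble density with potential `V`, its Vandermonde factor softened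
by `ε`. -/
noncomputable def softWeight (P : Finset (ι × ι)) (β ε : ℝ) (V : ℝ → ℝ) (l : ι → ℝ) : ℝ :=
  softVandermonde P β ε l * exp (-∑ i, V (l i))

/-- The Fréchet derivative of `log (softWeight P β ε V)` at `l`, for `0 < ε`. -/
noncomputable def softScore (P : Finset (ι × ι)) (β ε : ℝ) (V : ℝ → ℝ) (l : ι → ℝ) :
    (ι → ℝ) →L[ℝ] ℝ :=
  β • ∑ p ∈ P, (2 * (l p.2 - l p.1) / ((l p.2 - l p.1) ^ 2 + ε)) •
      ((.proj p.2 : (ι → ℝ) →L[ℝ] ℝ) - .proj p.1) -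
    ∑ i, deriv V (l i) • ContinuousLinearMap.proj i

/-- The difference quotient of `f` softened by `ε`; for `ε = 0` it is `slope f x y`, which is `0`
on the diagonal. -/
noncomputable def softSlope (ε : ℝ) (f : ℝ → ℝ) (x y : ℝ) : ℝ :=
  (y - x) * (f y - f x) / ((y - x) ^ 2 + ε)

/-- The bracket of the loop equation for the change of variables `λᵢ → λᵢ + t f(λᵢ)`: the
divergence of this vector field plus its derivative of the logarithm of the density. -/
noncomputable def softLoopFactor (P : Finset (ι × ι)) (β ε : ℝ) (V f : ℝ → ℝ) (l : ι → ℝ) : ℝ :=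
  ∑ i, deriv f (l i) + 2 * β * ∑ p ∈ P, softSlope ε f (l p.1) (l p.2) -
    ∑ i, f (l i) * deriv V (l i)

variable {P : Finset (ι × ι)} {β ε δ : ℝ} {V f : ℝ → ℝ}

lemma softScore_apply (l v : ι → ℝ) : softScore P β ε V l v =
    β * ∑ p ∈ P, 2 * (l p.2 - l p.1) / ((l p.2 - l p.1) ^ 2 + ε) * (v p.2 - v p.1) -
      ∑ i, deriv V (l i) * v i := by
  simp [softScore]

lemma softLoopFactor_eq_sum_deriv_add_softScore (l : ι → ℝ) :
    softLoopFactor P β ε V f l = ∑ i, deriv f (l i) + softScore P β ε V l (fun i ↦ f (l i)) := by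
  rw [softLoopFactor, softScore_apply, mul_comm 2 β, mul_assoc, Finset.mul_sum, add_sub_assoc]
  congr 3
  · exact Finset.sum_congr rfl fun p _ ↦ by rw [softSlope]; ring
  · exact funext fun i ↦ mul_comm _ _

lemma softWeight_eq_exp (hε : 0 < ε) (l : ι → ℝ) : softWeight P β ε V l =
    exp (β * ∑ p ∈ P, log ((l p.2 - l p.1) ^ 2 + ε) - ∑ i, V (l i)) := by
  rw [softWeight, softVandermonde, sub_eq_add_neg, exp_add, Finset.mul_sum, exp_sum]
  congr 1
  refine Finset.prod_congr rfl fun p _ ↦ ?_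
  rw [rpow_def_of_pos (by positivity), mul_comm]

lemma hasFDerivAt_softWeight (hε : 0 < ε) (hV : Differentiable ℝ V) (l : ι → ℝ) :
    HasFDerivAt (softWeight P β ε V) (softWeight P β ε V l • softScore P β ε V l) l := by
  have hlog (p : ι × ι) : HasFDerivAt (fun l : ι → ℝ ↦ log ((l p.2 - l p.1) ^ 2 + ε))
      ((2 * (l p.2 - l p.1) / ((l p.2 - l p.1) ^ 2 + ε)) •
        ((.proj p.2 : (ι → ℝ) →L[ℝ] ℝ) - .proj p.1)) l := by
    have hlogsq : HasDerivAt (fun x ↦ log (x ^ 2 + ε))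
        (2 * (l p.2 - l p.1) / ((l p.2 - l p.1) ^ 2 + ε)) (l p.2 - l p.1) := by
      simpa using ((hasDerivAt_pow 2 (l p.2 - l p.1)).add_const ε).log (by positivity)
    have hdiff : HasFDerivAt (fun l : ι → ℝ ↦ l p.2 - l p.1)
        ((.proj p.2 : (ι → ℝ) →L[ℝ] ℝ) - .proj p.1) l :=
      (hasFDerivAt_apply p.2 l).fun_sub (hasFDerivAt_apply p.1 l)
    exact hlogsq.comp_hasFDerivAt l hdiff
  rw [funext (softWeight_eq_exp hε)]
  exact (((HasFDerivAt.fun_sum (u := P) fun p _ ↦ hlog p).const_mul β).fun_sub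
    (HasFDerivAt.fun_sum (u := univ) fun i _ ↦ hasFDerivAt_comp_eval (hV (l i)))).exp

lemma HasPolynomialGrowth.integrable_mul_softWeight {F : (ι → ℝ) → ℝ} (hF : HasPolynomialGrowth F)
    (hFm : Measurable F) (hβ : 0 ≤ β)
    (hmom : ∀ m : ℕ, Integrable fun x ↦ x ^ m * exp (-V x)) :
    Integrable fun l ↦ F l * softWeight P β ε V l := by
  have hvand : HasPolynomialGrowth (softVandermonde P β ε) :=
    .prod fun p _ ↦ .rpow_const (by fun_prop) hβ
  have hvandm : Measurable (softVandermonde P β ε) := by unfold softVandermonde; fun_prop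
  refine ((hF.mul hvand).integrable_mul_prod (hFm.mul hvandm).aestronglyMeasurable
    fun _ ↦ hmom).congr (.of_forall fun l ↦ ?_)
  simp only [softWeight, ← Finset.sum_neg_distrib, exp_sum, mul_assoc]

lemma HasPolynomialGrowth.softScore_apply (hε : 0 < ε) (hV' : HasPolynomialGrowth (deriv V))
    (v : ι → ℝ) : HasPolynomialGrowth fun l ↦ softScore P β ε V l v := by
  have hinv (p : ι × ι) : HasPolynomialGrowth fun l : ι → ℝ ↦ ((l p.2 - l p.1) ^ 2 + ε)⁻¹ := by
    refine (const ε⁻¹ : HasPolynomialGrowth fun _ : ι → ℝ ↦ ε⁻¹).mono fun l ↦ ?_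
    rw [norm_of_nonneg (by positivity), norm_of_nonneg (by positivity)]
    gcongr
    linarith [sq_nonneg (l p.2 - l p.1)]
  simp only [_root_.softScore_apply, div_eq_mul_inv]
  fun_prop

lemma integral_softLoopFactor_mul_softWeight_of_pos (hε : 0 < ε) (hβ : 0 ≤ β)
    (hV : Differentiable ℝ V) (hV' : HasPolynomialGrowth (deriv V))
    (hmom : ∀ m : ℕ, Integrable fun x ↦ x ^ m * exp (-V x))
    (hf : Differentiable ℝ f) (hf' : HasPolynomialGrowth (deriv f)) :
    ∫ l, softLoopFactor P β ε V f l * softWeight P β ε V l = 0 := by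
  classical
  have hfg : HasPolynomialGrowth f := .of_deriv hf hf'
  have hfm : Measurable f := hf.continuous.measurable
  have hscore (v : ι → ℝ) : HasPolynomialGrowth fun l ↦ softScore P β ε V l v :=
    .softScore_apply hε hV' v
  have hscorem (v : ι → ℝ) : Measurable fun l ↦ softScore P β ε V l v := by
    simp only [softScore_apply]
    fun_prop
  have hfderiv (l v : ι → ℝ) :
      fderiv ℝ (softWeight P β ε V) l v = softScore P β ε V l v * softWeight P β ε V l := by
    simp [(hasFDerivAt_softWeight hε hV l).fderiv, mul_comm]
  have hdiv := integral_sum_deriv_mul_add_fderiv_eq_zero (w := softWeight P β ε V) (fun _ ↦ hf)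
    (fun l ↦ (hasFDerivAt_softWeight hε hV l).differentiableAt)
    (fun i ↦ HasPolynomialGrowth.integrable_mul_softWeight (by fun_prop) (by fun_prop) hβ hmom)
    (fun i ↦ HasPolynomialGrowth.integrable_mul_softWeight (by fun_prop) (by fun_prop) hβ hmom)
    (fun i ↦ by
      simp only [hfderiv, ← mul_assoc]
      exact HasPolynomialGrowth.integrable_mul_softWeight (by fun_prop) (by fun_prop) hβ hmom)
  simpa only [hfderiv, ← add_mul, ← softLoopFactor_eq_sum_deriv_add_softScore] using hdiv

lemma softWeight_nonneg (hε : 0 ≤ ε) (l : ι → ℝ) : 0 ≤ softWeight P β ε V l := by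
  unfold softWeight softVandermonde
  positivity

lemma softWeight_mono (hβ : 0 ≤ β) (hε : 0 ≤ ε) (hεδ : ε ≤ δ) (l : ι → ℝ) :
    softWeight P β ε V l ≤ softWeight P β δ V l := by
  unfold softWeight softVandermonde
  gcongr

lemma tendsto_softWeight (hβ : 0 ≤ β) (l : ι → ℝ) :
    Tendsto (fun δ ↦ softWeight P β δ V l) (𝓝 ε) (𝓝 (softWeight P β ε V l)) :=
  (tendsto_finsetProd _ fun _ _ ↦
    (tendsto_const_nhds.add tendsto_id).rpow_const (.inr hβ)).mul_const _

lemma softSlope_zero (x y : ℝ) : softSlope 0 f x y = slope f x y := by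
  rcases eq_or_ne x y with rfl | hxy
  · simp [softSlope]
  · have := sub_ne_zero.2 hxy.symm
    rw [softSlope, slope_def_field, add_zero]
    field_simp

lemma abs_softSlope_le (hε : 0 ≤ ε) (x y : ℝ) : |softSlope ε f x y| ≤ |slope f x y| := by
  rcases eq_or_ne x y with rfl | hxy
  · simp [softSlope]
  · have := sq_pos_of_ne_zero (sub_ne_zero.2 hxy.symm)
    rw [← softSlope_zero, softSlope, softSlope, abs_div, abs_div]
    gcongr

lemma tendsto_softSlope_zero (x y : ℝ) :
    Tendsto (fun δ ↦ softSlope δ f x y) (𝓝 0) (𝓝 (softSlope 0 f x y)) := by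
  rcases eq_or_ne x y with rfl | hxy
  · simp [softSlope]
  · have := pow_ne_zero 2 (sub_ne_zero.2 hxy.symm)
    exact tendsto_const_nhds.div (tendsto_const_nhds.add tendsto_id) (by simpa using this)

lemma tendsto_softLoopFactor_zero (l : ι → ℝ) :
    Tendsto (fun δ ↦ softLoopFactor P β δ V f l) (𝓝 0) (𝓝 (softLoopFactor P β 0 V f l)) :=
  ((tendsto_finsetSum _ fun _ _ ↦ tendsto_softSlope_zero _ _).const_mul _).const_add _
    |>.sub_const _

lemma exists_bound_softLoopFactor (hV' : HasPolynomialGrowth (deriv V))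
    (hf : Differentiable ℝ f) (hf' : HasPolynomialGrowth (deriv f)) :
    ∃ B : (ι → ℝ) → ℝ, HasPolynomialGrowth B ∧ Measurable B ∧
      ∀ ε, 0 ≤ ε → ∀ l, ‖softLoopFactor P β ε V f l‖ ≤ B l := by
  have hfg : HasPolynomialGrowth f := .of_deriv hf hf'
  have hfm : Measurable f := hf.continuous.measurable
  have hslope (p : ι × ι) : HasPolynomialGrowth fun l : ι → ℝ ↦ slope f (l p.1) (l p.2) :=
    (HasPolynomialGrowth.slope hf hf').comp (f := fun l : ι → ℝ ↦ (l p.1, l p.2)) (by fun_prop)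
  refine ⟨fun l ↦ ‖∑ i, deriv f (l i)‖ + ‖2 * β‖ * ∑ p ∈ P, ‖slope f (l p.1) (l p.2)‖ +
    ‖∑ i, f (l i) * deriv V (l i)‖, by fun_prop, ?_, fun ε hε l ↦ ?_⟩
  · simp only [slope_def_field]
    fun_prop
  · calc ‖softLoopFactor P β ε V f l‖
        ≤ ‖∑ i, deriv f (l i)‖ + ‖2 * β * ∑ p ∈ P, softSlope ε f (l p.1) (l p.2)‖ +
          ‖∑ i, f (l i) * deriv V (l i)‖ :=
          (norm_sub_le _ _).trans (add_le_add_left (norm_add_le _ _) _)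
      _ ≤ ‖∑ i, deriv f (l i)‖ + ‖2 * β‖ * ∑ p ∈ P, ‖slope f (l p.1) (l p.2)‖ +
          ‖∑ i, f (l i) * deriv V (l i)‖ := by
        rw [norm_mul]
        gcongr
        exact norm_sum_le_of_le _ fun p _ ↦ abs_softSlope_le hε _ _

lemma measurable_softLoopFactor (hf : Measurable f) : Measurable (softLoopFactor P β ε V f) := by
  unfold softLoopFactor softSlope
  fun_prop

lemma integrable_softLoopFactor_mul_softWeight (hβ : 0 ≤ β) (hε : 0 ≤ ε)
    (hV' : HasPolynomialGrowth (deriv V))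
    (hmom : ∀ m : ℕ, Integrable fun x ↦ x ^ m * exp (-V x))
    (hf : Differentiable ℝ f) (hf' : HasPolynomialGrowth (deriv f)) :
    Integrable fun l ↦ softLoopFactor P β ε V f l * softWeight P β ε V l := by
  obtain ⟨B, hB, -, hbound⟩ := exists_bound_softLoopFactor (P := P) (β := β) hV' hf hf'
  exact (hB.mono fun l ↦ (hbound ε hε l).trans (le_norm_self _)).integrable_mul_softWeight
    (measurable_softLoopFactor hf.continuous.measurable) hβ hmom

lemma integral_softLoopFactor_zero_mul_softWeight_zero (hβ : 0 ≤ β)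
    (hV : Differentiable ℝ V) (hV' : HasPolynomialGrowth (deriv V))
    (hmom : ∀ m : ℕ, Integrable fun x ↦ x ^ m * exp (-V x))
    (hf : Differentiable ℝ f) (hf' : HasPolynomialGrowth (deriv f)) :
    ∫ l, softLoopFactor P β 0 V f l * softWeight P β 0 V l = 0 := by
  obtain ⟨B, hB, hBm, hbound⟩ := exists_bound_softLoopFactor (P := P) (β := β) hV' hf hf'
  have hpos : ∀ᶠ δ : ℝ in 𝓝[>] 0, δ ∈ Set.Ioc (0 : ℝ) 1 := Ioc_mem_nhdsGT one_pos
  have hmeas (δ : ℝ) (hδ : δ ∈ Set.Ioc (0 : ℝ) 1) :=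
    (integrable_softLoopFactor_mul_softWeight (P := P) hβ hδ.1.le hV' hmom hf hf').1
  have hdom (δ : ℝ) (hδ : δ ∈ Set.Ioc (0 : ℝ) 1) (l : ι → ℝ) :
      ‖softLoopFactor P β δ V f l * softWeight P β δ V l‖ ≤ B l * softWeight P β 1 V l := by
    rw [norm_mul, norm_of_nonneg (softWeight_nonneg hδ.1.le l)]
    exact mul_le_mul (hbound δ hδ.1.le l) (softWeight_mono hβ hδ.1.le hδ.2 l)
      (softWeight_nonneg hδ.1.le l) ((norm_nonneg _).trans (hbound δ hδ.1.le l))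
  have hlim := tendsto_integral_filter_of_dominated_convergence (l := 𝓝[>] 0) _
    (hpos.mono hmeas) (hpos.mono fun δ hδ ↦ .of_forall (hdom δ hδ))
    (hB.integrable_mul_softWeight hBm hβ hmom)
    (.of_forall fun l ↦ ((tendsto_softLoopFactor_zero l).mul
      (tendsto_softWeight hβ l)).mono_left nhdsWithin_le_nhds)
  exact tendsto_nhds_unique_of_eventuallyEq hlim tendsto_const_nhds (hpos.mono fun δ hδ ↦
    integral_softLoopFactor_mul_softWeight_of_pos hδ.1 hβ hV hV' hmom hf hf')

end LoopEquation

theorem statement19_general {ι : Type*} [Fintype ι] {P : Finset (ι × ι)} {β ε : ℝ} {V f : ℝ → ℝ}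
    (hβ : 0 ≤ β) (hε : 0 ≤ ε)
    (hV : Differentiable ℝ V) (hV' : HasPolynomialGrowth (deriv V))
    (hmom : ∀ m : ℕ, Integrable fun x ↦ x ^ m * exp (-V x))
    (hf : Differentiable ℝ f) (hf' : HasPolynomialGrowth (deriv f)) :
    (Integrable fun l ↦ softLoopFactor P β ε V f l * softWeight P β ε V l) ∧
      ∫ l, softLoopFactor P β ε V f l * softWeight P β ε V l = 0 := by
  refine ⟨integrable_softLoopFactor_mul_softWeight hβ hε hV' hmom hf hf', ?_⟩
  rcases hε.eq_or_lt with rfl | hε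
  · exact integral_softLoopFactor_zero_mul_softWeight_zero hβ hV hV' hmom hf hf'
  · exact integral_softLoopFactor_mul_softWeight_of_pos hε hβ hV hV' hmom hf hf'

section Polynomial

/-- The pairs `(i, j)` with `i < j`, each unordered pair of eigenvalue indices counted once. -/
def ltPairs (n : ℕ) : Finset (Fin n × Fin n) := univ.filter fun p ↦ p.1 < p.2

lemma softVandermonde_zero {n : ℕ} (β : ℝ) (l : Fin n → ℝ) : softVandermonde (ltPairs n) β 0 l =
    ∏ i, ∏ j ∈ univ.filter (fun j ↦ i < j), |l j - l i| ^ (2 * β) := by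
  rw [softVandermonde, Finset.prod_finset_product (ltPairs n) univ
    (fun i ↦ univ.filter (fun j ↦ i < j)) (by simp [ltPairs])]
  refine Finset.prod_congr rfl fun i _ ↦ Finset.prod_congr rfl fun j _ ↦ ?_
  rw [add_zero, rpow_mul (abs_nonneg _), rpow_two, sq_abs]

lemma HasPolynomialGrowth.deriv_eval (P : Polynomial ℝ) :
    HasPolynomialGrowth (deriv fun x ↦ P.eval x) := by
  simpa only [funext fun x ↦ P.deriv (x := x)] using HasPolynomialGrowth.eval P.derivative

lemma HasPolynomialGrowth.deriv_pow (k : ℕ) :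
    HasPolynomialGrowth (deriv fun x : ℝ ↦ x ^ k) := by
  simpa using HasPolynomialGrowth.deriv_eval (.X ^ k)

lemma integrable_pow_mul_exp_neg_eval {V : Polynomial ℝ} (hdeg : 0 < V.natDegree)
    (heven : Even V.natDegree) (hlead : 0 ≤ V.leadingCoeff) (m : ℕ) :
    Integrable fun x ↦ x ^ m * exp (-V.eval x) := by
  simpa using integrable_eval_mul_exp_neg_eval (.X ^ m) hdeg heven hlead

lemma slope_pow {𝕜 : Type*} [Field 𝕜] {x y : 𝕜} (hxy : x ≠ y) (k : ℕ) :
    slope (fun t ↦ t ^ k) x y = ∑ m ∈ range k, x ^ m * y ^ (k - 1 - m) := by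
  rw [slope_def_field, div_eq_iff (sub_ne_zero.2 hxy.symm), ← neg_sub x y, mul_neg,
    geom_sum₂_mul, neg_sub]

lemma loopIntegrand_eq {n : ℕ} {β : ℝ} (hβ : β ≠ 0) (V : Polynomial ℝ) (k : ℕ) (l : Fin n → ℝ) :
    loopIntegrand n β V k l = softLoopFactor (ltPairs n) β 0 (fun x ↦ V.eval x) (fun x ↦ x ^ k) l *
      softWeight (ltPairs n) β 0 (fun x ↦ V.eval x) l := by
  rw [loopIntegrand, softWeight, ← softVandermonde_zero]
  by_cases hdiag : ∃ p ∈ ltPairs n, l p.1 = l p.2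
  · obtain ⟨p, hp, hlp⟩ := hdiag
    have hzero : softVandermonde (ltPairs n) β 0 l = 0 :=
      Finset.prod_eq_zero hp (by simp [hlp, zero_rpow hβ])
    simp [hzero]
  · push Not at hdiag
    congr 1
    rw [softLoopFactor]
    congr 3
    · simp
    · rw [← Finset.sum_finset_product (ltPairs n) univ _ (by simp [ltPairs])
        (f := fun p ↦ ∑ m ∈ range k, l p.1 ^ m * l p.2 ^ (k - 1 - m))]
      exact Finset.sum_congr rfl fun p hp ↦ by rw [softSlope_zero, slope_pow (hdiag p hp)]
    · simp

end Polynomial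

/-- loop equation of the one-matrix `β`-ensemble: for `n ≥ 1`,
real `β > 0`, a real polynomial `V` of even degree `≥ 2` with positive leading
coefficient, and an integer `k ≥ 1`, the loop-equation integrand is absolutely
integrable on `ℝⁿ` and its integral vanishes. -/
theorem statement19 (n : ℕ) (hn : 1 ≤ n) (β : ℝ) (hβ : 0 < β) (V : Polynomial ℝ)
    (hdeg : 2 ≤ V.natDegree) (heven : Even V.natDegree) (hlead : 0 < V.leadingCoeff)
    (k : ℕ) (hk : 1 ≤ k) :
    Integrable (loopIntegrand n β V k) (volume : Measure (Fin n → ℝ)) ∧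
      ∫ l : Fin n → ℝ, loopIntegrand n β V k l = 0 := by
  simpa only [← loopIntegrand_eq hβ.ne'] using statement19_general (P := ltPairs n) hβ.le le_rfl
    V.differentiable (.deriv_eval V)
    (integrable_pow_mul_exp_neg_eval (pos_of_gt hdeg) heven hlead.le)
    (differentiable_pow k) (.deriv_pow k)
end
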